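/- Let X be a length space and m ∈ ℕ with m ≥ 1. Then X has no asymptotic K_{1,m} minor if and only if X is quasi-isometric to a graph with no K_{1,m} minor. -/

import Mathlib

/-!
For a star-minor-free graph `G` and a quasi-isometry `f : X → G`, the `r`-neighbourhood of the
image of a connected set is connected, and sets that are far apart have disjoint such
neighbourhoods, for a suitable `r`. Hence a sufficiently fat star in `X` yields a star minor in
`G` (`not_asymptotic_of_graph`).

Conversely, suppose that `X` has no `K`-fat `K_{1,m}`. A connected set `C` together with `m`
points at distance about `K` from `C` and pairwise at distance at least `4 * K` forms a fat star
(`fat_star_of_near`). This has three consequences, where `o` is a base point.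

* No sphere about `o` contains `m` far apart points (`sphere_width`). So there are at most `m - 1`
  ends, and after removing a suitable ball all points far away lie in one of `n < m` unbounded
  components that do not split further (`exists_max_endFamily`, `exists_forall_unb`,
  `conn_of_max`).
* Large spheres meet each end in a set of diameter at most `10 * K` (`end_width`): otherwise a
  nearly shortest curve from `o` to a far point of the end would be the centre of a fat star,
  with one leaf in each of `m` disjoint annuli.
* Therefore each end is coarsely a ray, distances between different ends are coarsely distances
  through `o` (`exists_coarse_structure`), and `X` is quasi-isometric to the spider with `n`
  infinite legs (`quasiIsometric_spider`).

A spider with `n < m` legs has no `K_{1,m}` minor (`spider_minor_free`), except when `m = 2` and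
`n = 1`, where a ray contains `K_{1,2}`. That case does not occur, because a nearly shortest curve
between two points far apart contains a fat `K_{1,2}` (`fat_star_two`).

Fat minors ask for injective arcs, which are extracted from Lipschitz curves in `exists_arc`.
-/


/-- An `(M,A)`-quasi-isometry between two types equipped with distance functions. -/
def IsQuasiIsometry {X Y : Type*} (dX : X → X → ℝ) (dY : Y → Y → ℝ)
    (M A : ℝ) (f : X → Y) : Prop :=
  1 ≤ M ∧ 0 ≤ A ∧
  (∀ x y, M⁻¹ * dX x y - A ≤ dY (f x) (f y)) ∧
  (∀ x y, dY (f x) (f y) ≤ M * dX x y + A) ∧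
  (∀ z : Y, ∃ x : X, dY z (f x) ≤ A)

/-- Two distance spaces are quasi-isometric if some `(M,A)`-quasi-isometry exists. -/
def QuasiIsometric {X Y : Type*} (dX : X → X → ℝ) (dY : Y → Y → ℝ) : Prop :=
  ∃ M A f, IsQuasiIsometry dX dY M A f

/-- The graph distance of a simple graph, as a real-valued distance. -/
noncomputable def graphDist {V : Type*} (G : SimpleGraph V) (u v : V) : ℝ := (G.dist u v : ℝ)
/-- A metric space is a length space if any two points are joined by paths of length
arbitrarily close to their distance. -/
def IsLengthSpace (X : Type*) [MetricSpace X] : Prop :=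
  ∀ x y : X, ∀ ε : ℝ, 0 < ε → ∃ p : Path x y,
    eVariationOn (fun t => p t) Set.univ ≤ ENNReal.ofReal (dist x y + ε)
/-- `S` is an arc from `a` to `b`: the image of an injective path. -/
def IsArcIn {X : Type*} [TopologicalSpace X] (S : Set X) (a b : X) : Prop :=
  ∃ p : Path a b, Function.Injective (fun t => p t) ∧ Set.range (fun t => p t) = S

/-- A metric space `X` has the graph `H` as a `K`-fat minor: there are pairwise disjoint
connected branch sets `B v` and pairwise disjoint branch arcs `P e`, each branch arc meeting
the union of the branch sets exactly at its two endpoints (lying in the branch sets of the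
endvertices of the corresponding edge), such that any two of these sets are at distance
at least `K` unless they are equal or an incident branch set/branch arc pair. -/
def HasMetricFatMinor {W : Type*} (H : SimpleGraph W) (X : Type*) [MetricSpace X]
    (K : ℝ) : Prop :=
  ∃ (B : W → Set X) (P : Sym2 W → Set X),
    (∀ v, IsConnected (B v)) ∧
    (∀ v v', v ≠ v' → Disjoint (B v) (B v')) ∧
    (∀ u w, H.Adj u w → ∃ a ∈ B u, ∃ b ∈ B w,
        IsArcIn (P s(u, w)) a b ∧ P s(u, w) ∩ (⋃ v, B v) = {a, b}) ∧
    (∀ e ∈ H.edgeSet, ∀ e' ∈ H.edgeSet, e ≠ e' → Disjoint (P e) (P e')) ∧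
    (∀ v v', v ≠ v' → ∀ x ∈ B v, ∀ y ∈ B v', K ≤ dist x y) ∧
    (∀ e ∈ H.edgeSet, ∀ e' ∈ H.edgeSet, e ≠ e' → ∀ x ∈ P e, ∀ y ∈ P e', K ≤ dist x y) ∧
    (∀ u w, H.Adj u w → ∀ v, v ≠ u → v ≠ w → ∀ x ∈ P s(u, w), ∀ y ∈ B v, K ≤ dist x y)

/-- `X` has `H` as an asymptotic minor if it has a `K`-fat `H`-minor for every `K > 0`. -/
def HasAsymptoticMinor {W : Type*} (H : SimpleGraph W) (X : Type*) [MetricSpace X] : Prop :=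
  ∀ K : ℝ, 0 < K → HasMetricFatMinor H X K
/-- `H` is a minor of `G`: there are pairwise disjoint branch sets in `G`, one for each
vertex of `H`, inducing connected subgraphs, such that branch sets of adjacent vertices
of `H` are joined by an edge of `G`. -/
def IsGraphMinor {W V : Type*} (H : SimpleGraph W) (G : SimpleGraph V) : Prop :=
  ∃ B : W → Set V,
    (∀ w, (G.induce (B w)).Connected) ∧
    (∀ v v', v ≠ v' → Disjoint (B v) (B v')) ∧
    (∀ u w, H.Adj u w → ∃ a ∈ B u, ∃ b ∈ B w, G.Adj a b)

/-- The star `K_{1,m}`: the vertex `0` is the centre, joined to the `m` leaves. -/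
def starGraph (m : ℕ) : SimpleGraph (Fin (m + 1)) :=
  SimpleGraph.fromRel (fun u _ => u = 0)

open Set Filter Topology

/-! ### Lipschitz curves and arcs -/

/-- `LipJoin S a b`: the points `a` and `b` are joined by a `1`-Lipschitz curve running
inside `S`. The curve is a map on all of `ℝ`, but only its values on `[0, L]` matter. -/
def LipJoin {X : Type*} [MetricSpace X] (S : Set X) (a b : X) : Prop :=
  ∃ (L : ℝ) (q : ℝ → X), 0 ≤ L ∧ LipschitzWith 1 q ∧ q 0 = a ∧ q L = b ∧
    ∀ t ∈ Icc 0 L, q t ∈ S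

lemma lipschitz_dist {X : Type*} [MetricSpace X] {q : ℝ → X} (hq : LipschitzWith 1 q)
    (s t : ℝ) : dist (q s) (q t) ≤ |s - t| := by
  simpa [Real.dist_eq] using hq.dist_le_mul s t

/-- Reparametrisation by arc length: `v` plays the role of the length of `P` on `[0, t]`, and
the new curve at time `s` is `P` at the last moment at which the length is at most `s`.
Continuity of `v` is not needed. -/
lemma exists_lipschitz_reparam {X : Type*} [MetricSpace X] (P : ℝ → X) (hP : Continuous P)
    (v : ℝ → ℝ) (l : ℝ) (hl : 0 ≤ l) (hv0 : v 0 = 0) (hv1 : v 1 ≤ l)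
    (hv : ∀ t t', 0 ≤ t → t ≤ t' → t' ≤ 1 → dist (P t) (P t') ≤ v t' - v t) :
    ∃ q : ℝ → X, LipschitzWith 1 q ∧ q 0 = P 0 ∧ q l = P 1 := by
  set A : ℝ → Set ℝ := fun s => {t | 0 ≤ t ∧ t ≤ 1 ∧ v t ≤ s} with hA
  have hmono : ∀ t t', 0 ≤ t → t ≤ t' → t' ≤ 1 → v t ≤ v t' := fun t t' h1 h2 h3 => by
    have := hv t t' h1 h2 h3
    have := dist_nonneg (x := P t) (y := P t')
    linarith
  have hne : ∀ s, 0 ≤ s → (A s).Nonempty := fun s hs =>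
    ⟨0, le_rfl, zero_le_one, by rw [hv0]; exact hs⟩
  have hbd : ∀ s, BddAbove (A s) := fun s => ⟨1, fun t ht => ht.2.1⟩
  set τ : ℝ → ℝ := fun s => sSup (A s) with hτ
  have hτ0 : ∀ s, 0 ≤ s → 0 ≤ τ s := fun s hs =>
    le_csSup (hbd s) ⟨le_rfl, zero_le_one, by rw [hv0]; exact hs⟩
  have hτ1 : ∀ s, 0 ≤ s → τ s ≤ 1 := fun s hs => csSup_le (hne s hs) fun t ht => ht.2.1
  have hτm : ∀ s s', 0 ≤ s → s ≤ s' → τ s ≤ τ s' := fun s s' h h' =>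
    csSup_le_csSup (hbd s') (hne s h) fun t ht => ⟨ht.1, ht.2.1, ht.2.2.trans h'⟩
  have key : ∀ s s', 0 ≤ s → s ≤ s' → dist (P (τ s)) (P (τ s')) ≤ s' - s := by
    intro s s' hs hss
    rcases (hτm s s' hs hss).eq_or_lt with h | h
    · rw [h, dist_self]; linarith
    have h1 : ∀ t ∈ Ioo (τ s) (τ s'), s < v t := by
      intro t ht
      by_contra hc
      have : t ∈ A s := ⟨(hτ0 s hs).trans ht.1.le, ht.2.le.trans (hτ1 s' (hs.trans hss)),
        not_lt.1 hc⟩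
      exact absurd (le_csSup (hbd s) this) (not_le.2 ht.1)
    have h2 : ∀ t ∈ Ioo (τ s) (τ s'), v t ≤ s' := by
      intro t ht
      obtain ⟨u, hu, htu⟩ := exists_lt_of_lt_csSup (hne s' (hs.trans hss)) ht.2
      exact (hmono t u ((hτ0 s hs).trans ht.1.le) htu.le hu.2.1).trans hu.2.2
    have h3 : ∀ t ∈ Ioo (τ s) (τ s'), ∀ t' ∈ Ioo (τ s) (τ s'),
        dist (P t) (P t') ∈ Iic (s' - s) := by
      intro t ht t' ht'
      have b0 := fun t (ht : t ∈ Ioo (τ s) (τ s')) => (hτ0 s hs).trans ht.1.le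
      have b1 := fun t (ht : t ∈ Ioo (τ s) (τ s')) => ht.2.le.trans (hτ1 s' (hs.trans hss))
      rcases le_total t t' with hc | hc
      · have := hv t t' (b0 t ht) hc (b1 t' ht')
        have := h1 t ht
        have := h2 t' ht'
        simp only [mem_Iic]; linarith
      · have := hv t' t (b0 t' ht') hc (b1 t ht)
        have := h1 t' ht'
        have := h2 t ht
        rw [dist_comm]
        simp only [mem_Iic]; linarith
    have hcl : closure (Ioo (τ s) (τ s')) = Icc (τ s) (τ s') := closure_Ioo h.ne
    have := map_mem_closure₂ (f := fun t t' => dist (P t) (P t'))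
      (by simp only [Function.uncurry_def]; fun_prop)
      (hcl ▸ left_mem_Icc.2 h.le : τ s ∈ closure (Ioo (τ s) (τ s')))
      (hcl ▸ right_mem_Icc.2 h.le : τ s' ∈ closure (Ioo (τ s) (τ s'))) h3
    rwa [isClosed_Iic.closure_eq] at this
  refine ⟨fun s => P (τ (max s 0)), ?_, ?_, ?_⟩
  · refine LipschitzWith.of_dist_le_mul fun s s' => ?_
    simp only [NNReal.coe_one, one_mul, Real.dist_eq]
    refine le_trans ?_ (abs_max_sub_max_le_abs s s' 0)
    rcases le_total s s' with h | h
    · rw [abs_sub_comm]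
      exact (key _ _ (le_max_right _ _) (max_le_max_right 0 h)).trans (le_abs_self _)
    · rw [dist_comm]
      exact (key _ _ (le_max_right _ _) (max_le_max_right 0 h)).trans (le_abs_self _)
  · simp only [max_self]
    have h0 : τ 0 ∈ closure (A 0) := csSup_mem_closure (hne 0 le_rfl) (hbd 0)
    have := map_mem_closure (f := fun t => dist (P t) (P 0)) (by fun_prop) h0
      (t := Iic 0) (by
        intro t ht
        have h := hv 0 t le_rfl ht.1 ht.2.1
        have := ht.2.2
        rw [dist_comm] at h
        simp only [mem_Iic]; linarith)
    rw [isClosed_Iic.closure_eq] at this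
    exact dist_le_zero.1 this
  · simp only [max_eq_left hl]
    congr 1
    exact le_antisymm (hτ1 l hl) (le_csSup (hbd l) ⟨zero_le_one, le_rfl, hv1⟩)

/-- In a length space, any two points are joined by a nearly shortest curve parametrised with
speed at most one. -/
lemma IsLengthSpace.exists_lipschitz {X : Type*} [MetricSpace X] (hX : IsLengthSpace X)
    (x y : X) {ε : ℝ} (hε : 0 < ε) :
    ∃ q : ℝ → X, LipschitzWith 1 q ∧ q 0 = x ∧ q (dist x y + ε) = y := by
  obtain ⟨p, hp⟩ := hX x y ε hε
  have hl : 0 ≤ dist x y + ε := by positivity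
  set w : ℝ → ENNReal := fun t => eVariationOn (fun t => p t) {u : unitInterval | (u : ℝ) ≤ t}
    with hw
  have hwfin : ∀ t, w t ≠ ⊤ := fun t =>
    ((eVariationOn.mono _ (subset_univ _)).trans hp).trans_lt ENNReal.ofReal_lt_top |>.ne
  have hw0 : w 0 = 0 := by
    refine eVariationOn.subsingleton _ ?_
    intro a ha b hb
    have h1 : (a : ℝ) ≤ 0 := ha
    have h2 : (b : ℝ) ≤ 0 := hb
    exact Subtype.ext ((h1.antisymm a.2.1).trans (h2.antisymm b.2.1).symm)
  suffices hv : ∀ t t', 0 ≤ t → t ≤ t' → t' ≤ 1 →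
      dist (p.extend t) (p.extend t') ≤ (w t').toReal - (w t).toReal by
    obtain ⟨q, h1, h2, h3⟩ := exists_lipschitz_reparam p.extend p.continuous_extend
      (fun t => (w t).toReal) (dist x y + ε) hl (by simp [hw0])
      (ENNReal.toReal_le_of_le_ofReal hl ((eVariationOn.mono _ (subset_univ _)).trans hp)) hv
    exact ⟨q, h1, by simpa using h2, by simpa using h3⟩
  · intro t t' h0 htt h1
    set a : unitInterval := ⟨t, h0, htt.trans h1⟩
    set b : unitInterval := ⟨t', h0.trans htt, h1⟩
    have ea : p.extend t = p a := p.extend_apply a.2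
    have eb : p.extend t' = p b := p.extend_apply b.2
    have hsum : w t + edist (p a) (p b) ≤ w t' := by
      calc w t + edist (p a) (p b)
          ≤ w t + eVariationOn (fun t => p t) {u : unitInterval | t ≤ u ∧ (u : ℝ) ≤ t'} := by
            gcongr
            exact eVariationOn.edist_le (fun t => p t)
              (s := {u : unitInterval | t ≤ u ∧ (u : ℝ) ≤ t'}) ⟨le_rfl, htt⟩ ⟨htt, le_rfl⟩
        _ ≤ _ := eVariationOn.add_le_union _ (by
            intro x hx y hy
            exact Subtype.coe_le_coe.1 (le_trans (show (x : ℝ) ≤ t from hx) hy.1))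
        _ ≤ w t' := eVariationOn.mono _ (by
            rintro u (hu | hu)
            · exact le_trans (show (u : ℝ) ≤ t from hu) htt
            · exact hu.2)
    rw [ea, eb, dist_edist]
    have h := ENNReal.toReal_mono (hwfin t') hsum
    rw [ENNReal.toReal_add (hwfin t) (edist_ne_top _ _)] at h
    linarith

/-- A curve of minimal Lipschitz constant inside the compact trace of a given Lipschitz curve
is injective, since otherwise cutting out a loop would decrease the constant. The minimum
exists by Tychonoff's theorem. -/
lemma exists_arc {X : Type*} [MetricSpace X] {L : ℝ} (hL : 0 ≤ L) {q : ℝ → X}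
    (hq : LipschitzWith 1 q) (hne : q 0 ≠ q L) :
    ∃ T ⊆ q '' Icc 0 L, IsArcIn T (q 0) (q L) := by
  set S : Set X := q '' Icc 0 L with hS
  have hScomp : IsCompact S := isCompact_Icc.image hq.continuous
  set Ψ : Set (ℝ × (ℝ → X)) := {z | z.1 ∈ Icc 0 L ∧ z.2 ∈ univ.pi (fun _ : ℝ => S)} ∩
    {z | z.2 0 = q 0 ∧ z.2 1 = q L ∧ ∀ s t, dist (z.2 s) (z.2 t) ≤ z.1 * |s - t|} with hΨ
  have hcomp : IsCompact Ψ := by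
    refine IsCompact.inter_right (isCompact_Icc.prod (isCompact_univ_pi fun _ => hScomp)) ?_
    simp only [ofPred_and, ofPred_forall]
    refine (isClosed_eq (by fun_prop) (by fun_prop)).inter
      ((isClosed_eq (by fun_prop) (by fun_prop)).inter ?_)
    exact isClosed_iInter fun s => isClosed_iInter fun t => isClosed_le (by fun_prop) (by fun_prop)
  have hnon : Ψ.Nonempty := by
    refine ⟨(L, fun t => q (L * max 0 (min 1 t))), ⟨⟨hL, le_rfl⟩, fun t _ => ⟨_, ⟨?_, ?_⟩, rfl⟩⟩,
      by simp, by simp, fun s t => ?_⟩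
    · positivity
    · exact mul_le_of_le_one_right hL (max_le zero_le_one (min_le_left _ _))
    · refine (lipschitz_dist hq _ _).trans ?_
      rw [← mul_sub, abs_mul, abs_of_nonneg hL]
      refine mul_le_mul_of_nonneg_left ?_ hL
      have e1 : |max 0 (min 1 s) - max 0 (min 1 t)| ≤ |min 1 s - min 1 t| := by
        simpa [max_comm] using abs_max_sub_max_le_abs (min 1 s) (min 1 t) 0
      exact e1.trans (by simpa using abs_min_sub_min_le_max 1 s 1 t)
  obtain ⟨⟨c, f⟩, ⟨⟨⟨hc0, hcL⟩, hfS⟩, hf0, hf1, hflip⟩, hmin⟩ :=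
    hcomp.exists_isMinOn hnon continuous_fst.continuousOn
  simp only at hf0 hf1 hflip hc0 hcL hfS
  have hcpos : 0 < c := by
    have h := hflip 0 1
    rw [hf0, hf1] at h
    have := dist_pos.2 hne
    norm_num at h
    linarith
  have hinj : ∀ s t, 0 ≤ s → s < t → t ≤ 1 → f s ≠ f t := by
    intro s t hs hst ht heq
    set δ := t - s with hδ
    have hδ0 : 0 < δ := sub_pos.2 hst
    -- `g` skips the loop of `f` on `[s, t]`
    set g : ℝ → X := fun u => if (1 - δ) * u ≤ s then f ((1 - δ) * u) else f ((1 - δ) * u + δ)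
      with hg
    have hle : ∀ u u', u ≤ u' → dist (g u) (g u') ≤ c * (1 - δ) * |u - u'| := by
      intro u u' huu
      have h1δ : 0 ≤ 1 - δ := by linarith
      have hm : (1 - δ) * u ≤ (1 - δ) * u' := by gcongr
      have habs : c * (1 - δ) * |u - u'| = c * ((1 - δ) * u' - (1 - δ) * u) := by
        rw [abs_of_nonpos (by linarith)]; ring
      rw [habs]
      simp only [hg]
      split_ifs with h1 h2 h2
      · refine (hflip _ _).trans_eq ?_
        rw [abs_of_nonpos (by linarith)]; ring
      · have e1 := hflip ((1 - δ) * u) s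
        have e2 := hflip t ((1 - δ) * u' + δ)
        rw [abs_of_nonpos (by linarith)] at e1 e2
        have := dist_triangle (f ((1 - δ) * u)) (f s) (f ((1 - δ) * u' + δ))
        rw [heq] at this e1
        have : dist (f ((1 - δ) * u)) (f ((1 - δ) * u' + δ)) ≤
          c * -((1 - δ) * u - s) + c * -(t - ((1 - δ) * u' + δ)) := by linarith
        refine this.trans_eq ?_
        rw [hδ]; ring
      · exact absurd (hm.trans h2) h1
      · refine (hflip _ _).trans_eq ?_
        rw [abs_of_nonpos (by linarith)]; ring
    have hmem : (c * (1 - δ), g) ∈ Ψ := by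
      refine ⟨⟨⟨mul_nonneg hc0 (by linarith), ?_⟩, fun u _ => ?_⟩, ?_, ?_, ?_⟩
      · simp only; nlinarith
      · simp only [hg]; split_ifs <;> exact hfS _ trivial
      · simp [hg, hs, hf0]
      · simp only [hg, mul_one]
        split_ifs with h
        · have : t = 1 := by linarith
          have e : 1 - δ = s := by rw [hδ]; linarith
          rw [e, heq, this, hf1]
        · rw [sub_add_cancel, hf1]
      · intro u u'
        rcases le_total u u' with h | h
        · exact hle u u' h
        · simp only
          rw [dist_comm, abs_sub_comm]; exact hle u' u h
    have h : c ≤ c * (1 - δ) := hmin hmem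
    nlinarith
  have hfcont : Continuous f :=
    (LipschitzWith.of_dist_le_mul (K := ⟨c, hc0⟩) fun s t => by
      rw [Real.dist_eq]; exact hflip s t).continuous
  let p : Path (q 0) (q L) :=
    { toFun := fun t => f t
      continuous_toFun := by fun_prop
      source' := by simpa using hf0
      target' := by simpa using hf1 }
  refine ⟨range fun t => p t, ?_, p, ?_, rfl⟩
  · rintro _ ⟨t, rfl⟩
    exact hfS _ trivial
  · intro s t hst
    have hst : f s = f t := hst
    rcases lt_trichotomy (s : ℝ) t with h | h | h
    · exact absurd hst (hinj s t s.2.1 h t.2.2)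
    · exact Subtype.ext h
    · exact absurd hst.symm (hinj t s t.2.1 h s.2.2)

lemma IsArcIn.symm {X : Type*} [TopologicalSpace X] {S : Set X} {a b : X} (h : IsArcIn S a b) :
    IsArcIn S b a := by
  obtain ⟨p, hp, rfl⟩ := h
  refine ⟨p.symm, fun s t hst => ?_, p.symm_range⟩
  exact unitInterval.symm_bijective.injective (hp hst)

lemma IsArcIn.left_mem {X : Type*} [TopologicalSpace X] {S : Set X} {a b : X}
    (h : IsArcIn S a b) : a ∈ S := by
  obtain ⟨p, hp, rfl⟩ := h
  exact ⟨0, p.source⟩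

lemma IsArcIn.isConnected {X : Type*} [TopologicalSpace X] {S : Set X} {a b : X}
    (h : IsArcIn S a b) : IsConnected S := by
  obtain ⟨p, hp, rfl⟩ := h
  exact isConnected_range p.continuous

/-- Follow the curve from `a` until it first hits `C`. -/
lemma LipJoin.exists_arc_to_closed {X : Type*} [MetricSpace X] {S C : Set X} {a b : X}
    (h : LipJoin S a b) (hC : IsClosed C) (ha : a ∉ C) (hb : b ∈ C) :
    ∃ b' ∈ C, ∃ T ⊆ S, IsArcIn T a b' ∧ T ∩ C = {b'} := by
  obtain ⟨L, q, hL, hq, rfl, rfl, hS⟩ := h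
  have hcomp : IsCompact (Icc 0 L ∩ q ⁻¹' C) :=
    isCompact_Icc.inter_right (hC.preimage hq.continuous)
  obtain ⟨t, ⟨ht, htC⟩, htmin⟩ := hcomp.exists_isLeast ⟨L, ⟨hL, le_rfl⟩, hb⟩
  obtain ⟨T, hT, harc⟩ := exists_arc (L := t) ht.1 hq
    (fun he => ha (by rw [he]; exact htC))
  refine ⟨q t, htC, T, fun x hx => ?_, harc, ?_⟩
  · obtain ⟨u, hu, rfl⟩ := hT hx
    exact hS u ⟨hu.1, hu.2.trans ht.2⟩
  · refine Subset.antisymm ?_ ?_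
    · rintro x ⟨hx, hxC⟩
      obtain ⟨u, hu, rfl⟩ := hT hx
      have : t ≤ u := htmin ⟨⟨hu.1, hu.2.trans ht.2⟩, hxC⟩
      rw [mem_singleton_iff, le_antisymm hu.2 this]
    · rintro _ rfl
      exact ⟨harc.symm.left_mem, htC⟩

section LipJoinBasics

variable {X : Type*} [MetricSpace X] {S T : Set X} {a b c : X}

lemma LipJoin.left_mem (h : LipJoin S a b) : a ∈ S := by
  obtain ⟨L, q, hL, -, rfl, -, hS⟩ := h
  exact hS 0 ⟨le_rfl, hL⟩

lemma LipJoin.mono (h : LipJoin S a b) (hST : S ⊆ T) : LipJoin T a b := by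
  obtain ⟨L, q, hL, hq, h0, h1, hS⟩ := h
  exact ⟨L, q, hL, hq, h0, h1, fun t ht => hST (hS t ht)⟩

lemma LipJoin.refl (h : a ∈ S) : LipJoin S a a :=
  ⟨0, fun _ => a, le_rfl, LipschitzWith.const' a, rfl, rfl, fun _ _ => h⟩

/-- Any two points of a `1`-Lipschitz curve are joined along the curve. -/
lemma lipJoin_of_lipschitz {q : ℝ → X} (hq : LipschitzWith 1 q) {s t : ℝ} (hst : s ≤ t)
    (hS : ∀ u ∈ Icc s t, q u ∈ S) : LipJoin S (q s) (q t) := by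
  refine ⟨t - s, fun u => q (s + u), sub_nonneg.2 hst, ?_, by simp, by simp, fun u hu => ?_⟩
  · refine LipschitzWith.of_dist_le_mul fun u v => ?_
    have := lipschitz_dist hq (s + u) (s + v)
    simpa [Real.dist_eq] using this
  · exact hS _ ⟨by linarith [hu.1], by linarith [hu.2]⟩

lemma LipJoin.symm (h : LipJoin S a b) : LipJoin S b a := by
  obtain ⟨L, q, hL, hq, rfl, rfl, hS⟩ := h
  refine ⟨L, fun t => q (L - t), hL, ?_, by simp, by simp, fun t ht => ?_⟩
  · refine LipschitzWith.of_dist_le_mul fun s t => ?_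
    have := lipschitz_dist hq (L - s) (L - t)
    rw [sub_sub_sub_cancel_left, abs_sub_comm] at this
    simpa [Real.dist_eq] using this
  · exact hS _ ⟨by linarith [ht.2], by linarith [ht.1]⟩

lemma LipJoin.right_mem (h : LipJoin S a b) : b ∈ S := h.symm.left_mem

lemma LipJoin.trans (h : LipJoin S a b) (h' : LipJoin S b c) : LipJoin S a c := by
  obtain ⟨L, q, hL, hq, rfl, rfl, hS⟩ := h
  obtain ⟨L', q', hL', hq', h0, rfl, hS'⟩ := h'
  set r : ℝ → X := fun t => if t ≤ L then q t else q' (t - L) with hr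
  have key : ∀ s t, s ≤ t → dist (r s) (r t) ≤ t - s := by
    intro s t hst
    simp only [hr]
    split_ifs with h1 h2 h2
    · refine (lipschitz_dist hq s t).trans_eq ?_
      rw [abs_of_nonpos (by linarith)]; ring
    · have e1 := lipschitz_dist hq s L
      have e2 := lipschitz_dist hq' 0 (t - L)
      rw [abs_of_nonpos (by linarith)] at e1 e2
      rw [h0] at e2
      have := dist_triangle (q s) (q L) (q' (t - L))
      linarith
    · exact absurd (hst.trans h2) h1
    · refine (lipschitz_dist hq' _ _).trans_eq ?_
      rw [abs_of_nonpos (by linarith)]; ring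
  refine ⟨L + L', r, add_nonneg hL hL', ?_, by simp [hr, hL], ?_, fun t ht => ?_⟩
  · refine LipschitzWith.of_dist_le_mul fun s t => ?_
    simp only [NNReal.coe_one, one_mul, Real.dist_eq]
    rcases le_total s t with h | h
    · rw [abs_sub_comm]; exact (key s t h).trans (le_abs_self _)
    · rw [dist_comm]; exact (key t s h).trans (le_abs_self _)
  · simp only [hr]
    split_ifs with h
    · have : L' = 0 := by linarith
      rw [this, h0, add_zero]
    · simp
  · simp only [hr]
    split_ifs with h
    · exact hS t ⟨ht.1, h⟩
    · exact hS' _ ⟨by linarith, by linarith [ht.2]⟩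

end LipJoinBasics

/-- The image of a curve realising a `LipJoin` is bounded. -/
lemma LipJoin.exists_bounded {X : Type*} [MetricSpace X] {S : Set X} {a b : X}
    (h : LipJoin S a b) (o : X) : ∃ B : ℝ, LipJoin (S ∩ {x | dist o x ≤ B}) a b := by
  obtain ⟨L, q, hL, hq, rfl, rfl, hS⟩ := h
  refine ⟨dist o (q 0) + L, L, q, hL, hq, rfl, rfl, fun t ht => ⟨hS t ht, ?_⟩⟩
  have h1 := dist_triangle o (q 0) (q t)
  have h2 := lipschitz_dist hq 0 t
  rw [abs_of_nonpos (by linarith [ht.1])] at h2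
  simp only [mem_ofPred_eq]
  linarith [ht.2]

lemma IsLengthSpace.lipJoin_ball {X : Type*} [MetricSpace X] (hX : IsLengthSpace X)
    {x y : X} {r : ℝ} (h : dist x y < r) : LipJoin (Metric.ball x r) x y := by
  obtain ⟨q, hq, h0, h1⟩ := hX.exists_lipschitz x y (ε := (r - dist x y) / 2) (by linarith)
  refine ⟨_, q, ?_, hq, h0, h1, fun t ht => ?_⟩
  · have := dist_nonneg (x := x) (y := y); linarith
  · have := lipschitz_dist hq 0 t
    rw [h0, abs_of_nonpos (by linarith [ht.1])] at this
    rw [Metric.mem_ball']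
    linarith [ht.2]

/-! ### Producing fat stars -/

lemma starGraph_adj {m : ℕ} {u w : Fin (m + 1)} :
    (starGraph m).Adj u w ↔ u ≠ w ∧ (u = 0 ∨ w = 0) := by
  simp [starGraph, SimpleGraph.fromRel_adj]

lemma starGraph_edge {m : ℕ} {e : Sym2 (Fin (m + 1))} (he : e ∈ (starGraph m).edgeSet) :
    ∃ i : Fin m, e = s(0, i.succ) := by
  induction e with
  | _ u w =>
    rw [SimpleGraph.mem_edgeSet, starGraph_adj] at he
    obtain ⟨hne, rfl | rfl⟩ := he
    · obtain ⟨i, rfl⟩ := Fin.exists_succ_eq.2 hne.symm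
      exact ⟨i, rfl⟩
    · obtain ⟨i, rfl⟩ := Fin.exists_succ_eq.2 hne
      exact ⟨i, Sym2.eq_swap⟩

/-- A fat star whose leaves are single points: it suffices to join each leaf to the centre `C`
inside its own region `S i`, the regions being pairwise far apart. -/
lemma fat_star_of_lipJoin {X : Type*} [MetricSpace X] {m : ℕ} {K : ℝ} (hK : 0 < K)
    {C : Set X} (hC : IsConnected C) (x : Fin m → X) (S : Fin m → Set X)
    (hj : ∀ i, ∃ c ∈ C, LipJoin (S i) (x i) c) (hx : ∀ i, ∀ c ∈ C, K ≤ dist (x i) c)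
    (hS : ∀ i j, i ≠ j → ∀ s ∈ S i, ∀ t ∈ S j, K ≤ dist s t) :
    HasMetricFatMinor (starGraph m) X K := by
  have hx' : ∀ i, ∀ c ∈ closure C, K ≤ dist (x i) c := fun i =>
    closure_minimal (hx i) (isClosed_le continuous_const (continuous_const.dist continuous_id))
  have hxS : ∀ i, x i ∈ S i := fun i => (hj i).choose_spec.2.left_mem
  have harc : ∀ i, ∃ c ∈ closure C, ∃ T ⊆ S i, IsArcIn T (x i) c ∧ T ∩ closure C = {c} := by
    intro i
    obtain ⟨c, hc, h⟩ := hj i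
    refine h.exists_arc_to_closed isClosed_closure (fun hmem => ?_) (subset_closure hc)
    have := hx' i _ hmem
    rw [dist_self] at this
    linarith
  choose c hc T hTS hT hTC using harc
  set B : Fin (m + 1) → Set X := Fin.cons (closure C) (fun i => {x i}) with hB
  set P : Sym2 (Fin (m + 1)) → Set X :=
    fun e => ⋃ i : Fin m, ⋃ _ : e = s(0, i.succ), T i with hP
  have hB0 : B 0 = closure C := rfl
  have hBs : ∀ i : Fin m, B i.succ = {x i} := fun i => rfl
  have hPs : ∀ i : Fin m, P s(0, i.succ) = T i := by
    intro i
    ext y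
    simp only [hP, mem_iUnion, exists_prop]
    constructor
    · rintro ⟨j, hj, hy⟩
      simp only [Sym2.eq_iff, true_and] at hj
      rcases hj with hj | ⟨hj, -⟩
      · rwa [Fin.succ_injective _ hj]
      · exact absurd hj.symm (Fin.succ_ne_zero j)
    · exact fun hy => ⟨i, rfl, hy⟩
  have hdB : ∀ v v', v ≠ v' → ∀ y ∈ B v, ∀ z ∈ B v', K ≤ dist y z := by
    intro v v' hne y hy z hz
    induction v using Fin.cases with
    | zero =>
      induction v' using Fin.cases with
      | zero => exact absurd rfl hne
      | succ j =>
        obtain rfl : z = x j := hz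
        rw [dist_comm]
        exact hx' j y hy
    | succ i =>
      obtain rfl : y = x i := hy
      induction v' using Fin.cases with
      | zero => exact hx' i z hz
      | succ j =>
        obtain rfl : z = x j := hz
        exact hS i j (fun h => hne (by rw [h])) _ (hxS i) _ (hxS j)
  have hdP : ∀ e ∈ (starGraph m).edgeSet, ∀ e' ∈ (starGraph m).edgeSet, e ≠ e' →
      ∀ y ∈ P e, ∀ z ∈ P e', K ≤ dist y z := by
    intro e he e' he' hne y hy z hz
    obtain ⟨i, rfl⟩ := starGraph_edge he
    obtain ⟨j, rfl⟩ := starGraph_edge he'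
    rw [hPs] at hy hz
    exact hS i j (fun h => hne (by rw [h])) y (hTS i hy) z (hTS j hz)
  have disj : ∀ {Y Z : Set X}, (∀ y ∈ Y, ∀ z ∈ Z, K ≤ dist y z) → Disjoint Y Z := by
    intro Y Z h
    refine Set.disjoint_left.2 fun y hy hz => ?_
    have := h y hy y hz
    rw [dist_self] at this
    linarith
  have hinter : ∀ i, T i ∩ (⋃ v, B v) = {c i, x i} := by
    intro i
    refine Subset.antisymm ?_ ?_
    · rintro y ⟨hy, hyB⟩
      obtain ⟨v, hv⟩ := mem_iUnion.1 hyB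
      induction v using Fin.cases with
      | zero =>
        have : y ∈ T i ∩ closure C := ⟨hy, hv⟩
        rw [hTC] at this
        exact Or.inl this
      | succ j =>
        obtain rfl : y = x j := hv
        by_cases hij : i = j
        · right; rw [hij]; rfl
        · have := hS i j hij _ (hTS i hy) _ (hxS j)
          rw [dist_self] at this
          linarith
    · rintro y (rfl | rfl)
      · exact ⟨(hT i).symm.left_mem, mem_iUnion.2 ⟨0, hc i⟩⟩
      · exact ⟨(hT i).left_mem, mem_iUnion.2 ⟨i.succ, rfl⟩⟩
  refine ⟨B, P, ?_, fun v v' h => disj (hdB v v' h), ?_, fun e he e' he' h =>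
    disj (hdP e he e' he' h), hdB, hdP, ?_⟩
  · intro v
    induction v using Fin.cases with
    | zero => exact hC.closure
    | succ i => exact isConnected_singleton
  · intro u w huw
    obtain ⟨hne, rfl | rfl⟩ := starGraph_adj.1 huw
    · obtain ⟨i, rfl⟩ := Fin.exists_succ_eq.2 hne.symm
      refine ⟨c i, hc i, x i, rfl, ?_⟩
      rw [hPs]
      exact ⟨(hT i).symm, hinter i⟩
    · obtain ⟨i, rfl⟩ := Fin.exists_succ_eq.2 hne
      refine ⟨x i, rfl, c i, hc i, ?_⟩
      rw [Sym2.eq_swap, hPs, pair_comm]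
      exact ⟨hT i, hinter i⟩
  · intro u w huw v hvu hvw y hy z hz
    obtain ⟨i, hi⟩ := starGraph_edge ((SimpleGraph.mem_edgeSet _).2 huw)
    have hv : v ≠ 0 ∧ v ≠ i.succ := by
      rcases Sym2.eq_iff.1 hi with ⟨rfl, rfl⟩ | ⟨rfl, rfl⟩
      · exact ⟨hvu, hvw⟩
      · exact ⟨hvw, hvu⟩
    obtain ⟨j, rfl⟩ := Fin.exists_succ_eq.2 hv.1
    rw [hi, hPs] at hy
    obtain rfl : z = x j := hz
    exact hS i j (fun h => hv.2 (by rw [h])) _ (hTS i hy) _ (hxS j)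

/-- `m` points roughly at distance `K` from a connected set and pairwise far apart form a fat
star, because nearly shortest curves from them to the set stay near the points. -/
lemma fat_star_of_near {X : Type*} [MetricSpace X] (hX : IsLengthSpace X) {m : ℕ} {K : ℝ}
    (hK : 0 < K) {C : Set X} (hC : IsConnected C) (x : Fin m → X)
    (hx : ∀ i, ∀ c ∈ C, K ≤ dist (x i) c) (hx' : ∀ i, ∃ c ∈ C, dist (x i) c < 3 / 2 * K)
    (hxx : ∀ i j, i ≠ j → 4 * K ≤ dist (x i) (x j)) :
    HasMetricFatMinor (starGraph m) X K := by
  refine fat_star_of_lipJoin hK hC x (fun i => Metric.ball (x i) (3 / 2 * K)) (fun i => ?_) hx ?_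
  · obtain ⟨c, hc, h⟩ := hx' i
    exact ⟨c, hc, hX.lipJoin_ball h⟩
  · intro i j hij s hs t ht
    have h1 := hxx i j hij
    have h2 := dist_triangle4_right (x i) (x j) s t
    have h3 := dist_triangle4 (x i) s t (x j)
    rw [Metric.mem_ball'] at hs
    rw [Metric.mem_ball] at ht
    linarith

/-! ### Spheres and ends -/

/-- `Conn o R x y`: the points `x` and `y` are joined outside the ball of radius `R` about
`o`. -/
def Conn {X : Type*} [MetricSpace X] (o : X) (R : ℝ) (x y : X) : Prop :=
  LipJoin {z | R ≤ dist o z} x y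

/-- `Unb o R x`: the component of `x` outside the ball of radius `R` about `o` is unbounded. -/
def Unb {X : Type*} [MetricSpace X] (o : X) (R : ℝ) (x : X) : Prop :=
  ∀ s : ℝ, ∃ y, s ≤ dist o y ∧ Conn o R x y

section Coarse

variable {X : Type*} [MetricSpace X] {o : X}

lemma Conn.mono {R R' : ℝ} {x y : X} (h : Conn o R x y) (hR : R' ≤ R) : Conn o R' x y :=
  LipJoin.mono h fun _ hz => hR.trans hz

lemma Unb.mono {R R' : ℝ} {x : X} (h : Unb o R x) (hR : R' ≤ R) : Unb o R' x := fun s => by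
  obtain ⟨y, hy, hc⟩ := h s
  exact ⟨y, hy, hc.mono hR⟩

lemma Unb.of_conn {R : ℝ} {x y : X} (h : Unb o R x) (hxy : Conn o R x y) : Unb o R y :=
  fun s => by
  obtain ⟨z, hz, hc⟩ := h s
  exact ⟨z, hz, hxy.symm.trans hc⟩

lemma conn_of_near (hX : IsLengthSpace X) {R δ : ℝ} {x z : X} (hx : R + δ ≤ dist o x)
    (h : dist x z < δ) : Conn o R x z := by
  refine (hX.lipJoin_ball h).mono fun y hy => ?_
  rw [Metric.mem_ball] at hy
  have := dist_triangle o y x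
  simp only [mem_ofPred_eq]
  linarith

/-- Descend from `y` towards `o` along a nearly shortest curve until reaching the sphere of
radius `s`. -/
lemma exists_descend (hX : IsLengthSpace X) (y : X) {s ε : ℝ} (hs0 : 0 ≤ s)
    (hs : s ≤ dist o y) (hε : 0 < ε) :
    ∃ c, dist o c = s ∧ dist y c ≤ dist o y - s + ε ∧ Conn o (s - ε) y c := by
  obtain ⟨q, hq, h0, h1⟩ := hX.exists_lipschitz y o hε
  set L := dist y o + ε with hL
  have hL0 : 0 ≤ L := by positivity
  have hivt := intermediate_value_Icc' hL0
    (f := fun t => dist o (q t)) (continuous_const.dist hq.continuous).continuousOn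
  obtain ⟨t, ht, hts⟩ := hivt (show s ∈ Icc _ _ by simp [h0, h1, hs0, hs])
  simp only at hts
  have htL : t ≤ dist o y - s + ε := by
    have := lipschitz_dist hq L t
    rw [h1, hts, abs_of_nonneg (by linarith [ht.2])] at this
    rw [dist_comm o y]; linarith
  refine ⟨q t, hts, ?_, ?_⟩
  · have := lipschitz_dist hq 0 t
    rw [h0, abs_of_nonpos (by linarith [ht.1])] at this
    linarith
  · have : LipJoin _ (q 0) (q t) := lipJoin_of_lipschitz hq ht.1 (S := {z | s - ε ≤ dist o z}) (by
      intro u hu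
      have h2 := lipschitz_dist hq 0 u
      rw [h0, abs_of_nonpos (by linarith [hu.1])] at h2
      have h3 := dist_triangle_right o y (q u)
      have h4 := dist_comm o (q u)
      simp only [mem_ofPred_eq]
      linarith [hu.2])
    rwa [h0] at this

lemma isConnected_of_lipJoin {C : Set X} (ho : o ∈ C) (h : ∀ x ∈ C, LipJoin C o x) :
    IsConnected C := by
  refine ⟨⟨o, ho⟩, isPreconnected_of_forall o fun x hx => ?_⟩
  obtain ⟨L, q, hL, hq, h0, h1, hS⟩ := h x hx
  exact ⟨q '' Icc 0 L, by rintro _ ⟨t, ht, rfl⟩; exact hS t ht, ⟨0, ⟨le_rfl, hL⟩, h0⟩,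
    ⟨L, ⟨hL, le_rfl⟩, h1⟩, isPreconnected_Icc.image _ hq.continuous.continuousOn⟩

/-- Spheres have bounded coarse width: `m` far apart points on a sphere would form a fat star
around the concentric ball. -/
lemma sphere_width (hX : IsLengthSpace X) {m : ℕ} {K : ℝ} (hK : 0 < K)
    (hN : ¬ HasMetricFatMinor (starGraph m) X K) {r : ℝ} (hr : 2 * K ≤ r) (x : Fin m → X)
    (hx : ∀ i, dist o (x i) = r) : ∃ i j, i ≠ j ∧ dist (x i) (x j) < 4 * K := by
  by_contra! hcon
  refine hN (fat_star_of_near hX hK (C := Metric.ball o (r - K)) ?_ x ?_ ?_ hcon)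
  · refine isConnected_of_lipJoin (o := o) (Metric.mem_ball_self (by linarith)) fun y hy => ?_
    exact hX.lipJoin_ball (by rwa [Metric.mem_ball'] at hy)
  · intro i c hc
    rw [Metric.mem_ball'] at hc
    have := dist_triangle_right o (x i) c
    rw [hx] at this
    linarith
  · intro i
    obtain ⟨c, hc, hd, -⟩ := exists_descend hX (o := o) (x i) (s := r - 5 / 4 * K) (ε := K / 8)
      (by linarith) (by rw [hx]; linarith) (by linarith)
    refine ⟨c, ?_, ?_⟩
    · rw [Metric.mem_ball', hc]; linarith
    · rw [hx] at hd; linarith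

/-- A set without `m` points pairwise at distance at least `s` has a finite `s`-net. -/
lemma exists_net {A : Set X} {s : ℝ} (hs : 0 < s) {m : ℕ}
    (h : ∀ x : Fin m → X, (∀ i, x i ∈ A) → ∃ i j, i ≠ j ∧ dist (x i) (x j) < s) :
    ∃ F : Finset X, (∀ c ∈ F, c ∈ A) ∧ ∀ w ∈ A, ∃ c ∈ F, dist w c < s := by
  classical
  by_contra! hcon
  have key : ∀ k : ℕ, ∃ F : Finset X, F.card = k ∧ (∀ c ∈ F, c ∈ A) ∧
      ∀ c ∈ F, ∀ c' ∈ F, c ≠ c' → s ≤ dist c c' := by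
    intro k
    induction k with
    | zero => exact ⟨∅, by simp⟩
    | succ k ih =>
      obtain ⟨F, hF, hFA, hsep⟩ := ih
      obtain ⟨w, hwA, hw⟩ := hcon F hFA
      have hwF : w ∉ F := fun hmem => by
        have := hw w hmem
        rw [dist_self] at this
        linarith
      refine ⟨insert w F, by rw [Finset.card_insert_of_notMem hwF, hF], ?_, ?_⟩
      · intro c hc
        rcases Finset.mem_insert.1 hc with rfl | hc
        · exact hwA
        · exact hFA c hc
      · intro c hc c' hc' hne
        rcases Finset.mem_insert.1 hc with rfl | h1 <;>
        rcases Finset.mem_insert.1 hc' with rfl | h2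
        · exact absurd rfl hne
        · exact hw c' h2
        · rw [dist_comm]; exact hw c h1
        · exact hsep c h1 c' h2 hne
  obtain ⟨F, hF, hFA, hsep⟩ := key m
  let g := F.equivFinOfCardEq hF
  obtain ⟨i, j, hij, hd⟩ := h (fun i => (g.symm i : X)) fun i => hFA _ (g.symm i).2
  have := hsep _ (g.symm i).2 _ (g.symm j).2 fun he => hij (g.symm.injective (Subtype.ext he))
  linarith

/-- Sufficiently far points lie in unbounded components. -/
lemma exists_forall_unb (hX : IsLengthSpace X) {m : ℕ} {K : ℝ} (hK : 0 < K)
    (hN : ¬ HasMetricFatMinor (starGraph m) X K) {R : ℝ} (hR : 0 ≤ R) :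
    ∃ R' : ℝ, ∀ x, R' ≤ dist o x → Unb o R x := by
  classical
  set s := R + 5 * K with hs
  obtain ⟨F, hFA, hF⟩ := exists_net (A := {x | dist o x = s}) (s := 4 * K) (by linarith)
    (fun x hx => sphere_width hX hK hN (by linarith) x hx)
  have hb : ∀ c, ∃ b : ℝ, ¬ Unb o R c → ∀ y, b ≤ dist o y → ¬ Conn o R c y := by
    intro c
    by_cases h : Unb o R c
    · exact ⟨0, fun h' => absurd h h'⟩
    · simp only [Unb, not_forall, not_exists, not_and] at h
      obtain ⟨b, hb⟩ := h
      exact ⟨b, fun _ => hb⟩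
  choose b hb using hb
  obtain ⟨M, hM⟩ := (F.image b).exists_le
  refine ⟨max s M, fun x hx => ?_⟩
  obtain ⟨c', hc', -, hconn⟩ := exists_descend hX (o := o) x (s := s) (by positivity)
    ((le_max_left _ _).trans hx) hK
  obtain ⟨c, hcF, hcc⟩ := hF c' hc'
  have h1 : Conn o R x c :=
    (hconn.mono (by linarith)).trans (conn_of_near hX (by rw [hc']; linarith) hcc)
  by_contra hcon
  have hcU : ¬ Unb o R c := fun h => hcon (h.of_conn h1.symm)
  exact hb c hcU x ((hM _ (Finset.mem_image_of_mem b hcF)).trans ((le_max_right _ _).trans hx))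
    h1.symm

/-- `EndFamily o R p`: the points `p i` lie in distinct unbounded components outside the ball
of radius `R` about `o`. -/
def EndFamily (o : X) (R : ℝ) {n : ℕ} (p : Fin n → X) : Prop :=
  (∀ i, Unb o R (p i)) ∧ ∀ i j, i ≠ j → ¬ Conn o R (p i) (p j)

lemma EndFamily.card_lt (hX : IsLengthSpace X) {m : ℕ} {K : ℝ} (hK : 0 < K)
    (hN : ¬ HasMetricFatMinor (starGraph m) X K) {R : ℝ} (hR : 0 ≤ R) {p : Fin m → X} :
    ¬ EndFamily o R p := by
  rintro ⟨hU, hp⟩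
  set s := R + 5 * K with hs
  have : ∀ i, ∃ c, dist o c = s ∧ Conn o R (p i) c := by
    intro i
    obtain ⟨y, hy, hc⟩ := hU i s
    obtain ⟨c, h1, -, h2⟩ := exists_descend hX (o := o) y (s := s) (by positivity) hy hK
    exact ⟨c, h1, hc.trans (h2.mono (by linarith))⟩
  choose c hc hpc using this
  obtain ⟨i, j, hij, hd⟩ := sphere_width hX hK hN (r := s) (by linarith) c hc
  exact hp i j hij ((hpc i).trans ((conn_of_near hX (by rw [hc]; linarith) hd).trans
    (LipJoin.symm (hpc j))))

/-- A family of the maximal possible number of ends. -/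
lemma exists_max_endFamily (hX : IsLengthSpace X) {m : ℕ} {K : ℝ} (hK : 0 < K)
    (hN : ¬ HasMetricFatMinor (starGraph m) X K) (o : X) :
    ∃ n < m, ∃ R₀ : ℝ, 0 ≤ R₀ ∧ ∃ p : Fin n → X, EndFamily o R₀ p ∧
      ∀ R, 0 ≤ R → ∀ p' : Fin (n + 1) → X, ¬ EndFamily o R p' := by
  by_contra! hcon
  have key : ∀ k ≤ m, ∃ R₀ : ℝ, 0 ≤ R₀ ∧ ∃ p : Fin k → X, EndFamily o R₀ p := by
    intro k
    induction k with
    | zero => exact fun _ => ⟨0, le_rfl, Fin.elim0, fun i => i.elim0, fun i => i.elim0⟩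
    | succ k ih =>
      intro hk
      obtain ⟨R₀, hR₀, p, hp⟩ := ih (by omega)
      obtain ⟨R, hR, p', hp'⟩ := hcon k (by omega) R₀ hR₀ p hp
      exact ⟨R, hR, p', hp'⟩
  obtain ⟨R₀, hR₀, p, hp⟩ := key m le_rfl
  exact EndFamily.card_lt hX hK hN hR₀ hp

lemma EndFamily.cons {R : ℝ} {n : ℕ} {p : Fin n → X} (hp : EndFamily o R p) {x : X}
    (hx : Unb o R x) (h : ∀ i, ¬ Conn o R (p i) x) :
    EndFamily o R (Fin.cons x p : Fin (n + 1) → X) := by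
  refine ⟨fun i => ?_, fun i j hij => ?_⟩
  · induction i using Fin.cases with
    | zero => exact hx
    | succ i => exact hp.1 i
  · induction i using Fin.cases with
    | zero =>
      induction j using Fin.cases with
      | zero => exact absurd rfl hij
      | succ j => exact fun hc => h j (LipJoin.symm hc)
    | succ i =>
      induction j using Fin.cases with
      | zero => exact h i
      | succ j => exact hp.2 i j fun he => hij (by rw [he])

/-- Beyond the radius of a maximal family of ends, ends no longer split. -/
lemma conn_of_max {R₀ : ℝ} (hR₀ : 0 ≤ R₀) {n : ℕ} {p : Fin n → X} (hp : EndFamily o R₀ p)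
    (hmax : ∀ R, 0 ≤ R → ∀ p' : Fin (n + 1) → X, ¬ EndFamily o R p') {R : ℝ} (hR : R₀ ≤ R)
    (hfar : ∃ R' : ℝ, ∀ x, R' ≤ dist o x → Unb o R x) {x z : X} (hx : Unb o R x)
    (hz : Unb o R z) (hxz : Conn o R₀ x z) : Conn o R x z := by
  classical
  by_contra hcon
  obtain ⟨i₀, hi₀⟩ : ∃ i, Conn o R₀ (p i) x := by
    by_contra! h
    exact hmax R₀ hR₀ _ (hp.cons (hx.mono hR) h)
  obtain ⟨R', hR'⟩ := hfar
  have : ∀ i, ∃ p', Unb o R p' ∧ Conn o R₀ (p i) p' := by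
    intro i
    obtain ⟨y, hy, hc⟩ := hp.1 i R'
    exact ⟨y, hR' y hy, hc⟩
  choose p' hp'U hp'c using this
  set p'' := Function.update p' i₀ x with hp''
  have hc : ∀ i, Conn o R₀ (p i) (p'' i) := by
    intro i
    by_cases h : i = i₀
    · subst h; simpa [hp''] using hi₀
    · simpa [hp'', h] using hp'c i
  have hfam : EndFamily o R p'' := by
    refine ⟨fun i => ?_, fun i j hij h => ?_⟩
    · by_cases h : i = i₀
      · subst h; simpa [hp''] using hx
      · simpa [hp'', h] using hp'U i
    · exact hp.2 i j hij ((hc i).trans ((h.mono hR).trans (LipJoin.symm (hc j))))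
  refine hmax R (hR₀.trans hR) _ (hfam.cons hz fun i h => ?_)
  by_cases hi : i = i₀
  · subst hi
    exact hcon (by simpa [hp''] using h)
  · exact hp.2 i i₀ hi ((hc i).trans ((h.mono hR).trans
      ((LipJoin.symm hxz).trans (LipJoin.symm hi₀))))

end Coarse

/-! ### Width of ends and the coarse structure -/

section Width

variable {X : Type*} [MetricSpace X] {o : X}

/-- The last time a curve from `o` crosses the sphere of radius `r`. -/
lemma exists_last_crossing {q : ℝ → X} (hq : LipschitzWith 1 q) (h0 : q 0 = o) {L r : ℝ}
    (hL : 0 ≤ L) (hr0 : 0 ≤ r) (hr : r ≤ dist o (q L)) :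
    ∃ t ∈ Icc 0 L, dist o (q t) = r ∧ ∀ u ∈ Icc t L, r ≤ dist o (q u) := by
  have hcont : Continuous fun t => dist o (q t) := continuous_const.dist hq.continuous
  have hcomp : IsCompact (Icc 0 L ∩ (fun t => dist o (q t)) ⁻¹' Iic r) :=
    isCompact_Icc.inter_right (isClosed_Iic.preimage hcont)
  obtain ⟨t, ⟨ht, htr⟩, hmax⟩ := hcomp.exists_isGreatest
    ⟨0, ⟨le_rfl, hL⟩, by simp [h0, hr0]⟩
  obtain ⟨u, hu, hur⟩ := intermediate_value_Icc ht.2 hcont.continuousOn ⟨htr, hr⟩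
  simp only at hur
  have hut : u ≤ t := hmax ⟨⟨ht.1.trans hu.1, hu.2⟩, hur.le⟩
  obtain rfl : u = t := le_antisymm hut hu.1
  refine ⟨u, ht, hur, fun v hv => ?_⟩
  by_contra! hlt
  have hvu : v ≤ u := hmax ⟨⟨ht.1.trans hv.1, hv.2⟩, hlt.le⟩
  rw [le_antisymm hvu hv.1, hur] at hlt
  exact lt_irrefl _ hlt

/-- If an end contains pairs of far apart points on arbitrarily large spheres, then it does so
inside annuli in which the pair is joined to every point of the end on the same sphere. The
outer radius `b` can be chosen uniformly since the sphere has a finite net. -/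
lemma exists_annulus (hX : IsLengthSpace X) {m : ℕ} {K : ℝ} (hK : 0 < K)
    (hN : ¬ HasMetricFatMinor (starGraph m) X K) {R₀ : ℝ} (hR₀ : 0 ≤ R₀) {n : ℕ}
    {p : Fin n → X} (hp : EndFamily o R₀ p)
    (hmax : ∀ R, 0 ≤ R → ∀ p' : Fin (n + 1) → X, ¬ EndFamily o R p') (i : Fin n)
    (hbad : ∀ R : ℝ, ∃ x z, R ≤ dist o x ∧ dist o z = dist o x ∧ Conn o R₀ (p i) x ∧
      Conn o R₀ (p i) z ∧ 10 * K < dist x z) (ρ : ℝ) :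
    ∃ (b r : ℝ) (x z : X), ρ ≤ r ∧ R₀ ≤ r ∧ r ≤ b ∧ dist o x = r ∧ dist o z = r ∧
      10 * K < dist x z ∧ ∀ w, dist o w = r → Conn o R₀ (p i) w →
        LipJoin {y | ρ ≤ dist o y ∧ dist o y ≤ b} x w ∧
        LipJoin {y | ρ ≤ dist o y ∧ dist o y ≤ b} z w := by
  classical
  set R := max ρ R₀ with hR
  have hRR : R₀ ≤ R := le_max_right _ _
  obtain ⟨R', hR'⟩ := exists_forall_unb hX hK hN (o := o) (hR₀.trans hRR)
  obtain ⟨x, z, hx, hzx, hpx, hpz, hxz⟩ := hbad (max R' (R + 4 * K))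
  set r := dist o x with hr
  have hrR' : R' ≤ r := (le_max_left _ _).trans hx
  have hrR : R + 4 * K ≤ r := (le_max_right _ _).trans hx
  have hconn : ∀ u v, dist o u = r → dist o v = r → Conn o R₀ (p i) u → Conn o R₀ (p i) v →
      Conn o R u v := fun u v hu hv hpu hpv =>
    conn_of_max hR₀ hp hmax hRR ⟨R', hR'⟩ (hR' u (hu ▸ hrR')) (hR' v (hv ▸ hrR'))
      ((LipJoin.symm hpu).trans hpv)
  obtain ⟨F, hFA, hF⟩ := exists_net (A := {w | dist o w = r ∧ Conn o R₀ (p i) w}) (s := 4 * K)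
    (m := m) (by linarith)
    (fun x hx => sphere_width hX hK hN (by linarith) x fun i => (hx i).1)
  have hB : ∀ u : X, ∀ c : X, ∃ B : ℝ, Conn o R u c →
      LipJoin ({y | R ≤ dist o y} ∩ {y | dist o y ≤ B}) u c := by
    intro u c
    by_cases h : Conn o R u c
    · obtain ⟨B, hB⟩ := h.exists_bounded o
      exact ⟨B, fun _ => hB⟩
    · exact ⟨0, fun h' => absurd h' h⟩
  choose B hB using hB
  obtain ⟨M₁, hM₁⟩ := (F.image (B x)).exists_le
  obtain ⟨M₂, hM₂⟩ := (F.image (B z)).exists_le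
  set b := max (r + 4 * K) (max M₁ M₂) with hb
  have hb0 : r + 4 * K ≤ b := le_max_left _ _
  have hb1 : M₁ ≤ b := (le_max_left _ _).trans (le_max_right _ _)
  have hb2 : M₂ ≤ b := (le_max_right _ _).trans (le_max_right _ _)
  refine ⟨b, r, x, z, ?_, ?_, by linarith, rfl, hzx, hxz, fun w hw hpw => ?_⟩
  · have := le_max_left ρ R₀; linarith
  · linarith
  obtain ⟨c, hcF, hwc⟩ := hF w ⟨hw, hpw⟩
  obtain ⟨hcr, hpc⟩ := hFA c hcF
  have hsub : ∀ M ≤ b, ({y | R ≤ dist o y} ∩ {y | dist o y ≤ M}) ⊆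
      {y | ρ ≤ dist o y ∧ dist o y ≤ b} := fun M hM y hy =>
    ⟨(le_max_left _ _).trans hy.1, le_trans hy.2 hM⟩
  have hcw : LipJoin {y | ρ ≤ dist o y ∧ dist o y ≤ b} c w := by
    refine ((hX.lipJoin_ball hwc).mono fun y hy => ?_).symm
    rw [Metric.mem_ball] at hy
    have h1 := dist_triangle o y w
    have h2 := dist_triangle o w y
    rw [dist_comm w y] at h2
    have h3 := le_max_left ρ R₀
    exact ⟨by linarith, by linarith⟩
  exact ⟨((hB x c (hconn x c rfl hcr hpx hpc)).mono
      (hsub _ ((hM₁ _ (Finset.mem_image_of_mem _ hcF)).trans hb1))).trans hcw,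
    ((hB z c (hconn z c hzx hcr hpz hpc)).mono
      (hsub _ ((hM₂ _ (Finset.mem_image_of_mem _ hcF)).trans hb2))).trans hcw⟩

/-- A point far from the last crossing point `q t` of a nearly shortest curve with its sphere
is far from the whole curve. -/
lemma far_from_curve {q : ℝ → X} (hq : LipschitzWith 1 q) {L K : ℝ} (h0 : q 0 = o)
    (hL : L ≤ dist o (q L) + K) {t u : ℝ} (ht : t ∈ Icc 0 L)
    (hu : u ∈ Icc 0 L) {v : X} (hv : dist o v = dist o (q t)) (hfar : 5 * K < dist v (q t)) :
    2 * K ≤ dist v (q u) := by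
  have low : ∀ s ∈ Icc 0 L, s - K ≤ dist o (q s) := by
    intro s hs
    have h1 := lipschitz_dist hq s L
    rw [abs_of_nonpos (by linarith [hs.2])] at h1
    have h2 := dist_triangle o (q s) (q L)
    linarith
  have up : ∀ s ∈ Icc 0 L, dist o (q s) ≤ s := by
    intro s hs
    have h1 := lipschitz_dist hq 0 s
    rw [abs_of_nonpos (by linarith [hs.1]), h0] at h1
    linarith
  have h1 := low t ht
  have h2 := low u hu
  have h3 := up t ht
  have h4 := up u hu
  have h5 := dist_triangle v (q u) (q t)
  have h6 := lipschitz_dist hq u t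
  have h7 := dist_triangle o v (q u)
  have h8 := dist_triangle_right o v (q u)
  have h9 : |u - t| ≤ dist v (q u) + K := abs_le.2 ⟨by linarith, by linarith⟩
  linarith

/-- On large spheres each end has diameter at most `10 * K`. Otherwise take a nearly shortest
curve `C` from `o` to a far point of the end; in each of `m` disjoint annuli it misses one
point of a far apart pair, and walking from that point to `C` inside the annulus yields a
point at distance about `K` from `C`. These points are the leaves of a fat star with
centre `C`. -/
lemma end_width (hX : IsLengthSpace X) {m : ℕ} {K : ℝ} (hK : 0 < K)
    (hN : ¬ HasMetricFatMinor (starGraph m) X K) {R₀ : ℝ} (hR₀ : 0 ≤ R₀) {n : ℕ}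
    {p : Fin n → X} (hp : EndFamily o R₀ p)
    (hmax : ∀ R, 0 ≤ R → ∀ p' : Fin (n + 1) → X, ¬ EndFamily o R p') (i : Fin n) :
    ∃ R : ℝ, ∀ x z, R ≤ dist o x → dist o z = dist o x → Conn o R₀ (p i) x →
      Conn o R₀ (p i) z → dist x z ≤ 10 * K := by
  by_contra! hbad
  choose b r x z hρr hR₀r hrb hxr hzr hxz hjoin using
    exists_annulus hX hK hN hR₀ hp hmax i hbad
  let ρ : ℕ → ℝ := fun k => Nat.rec 0 (fun _ s => b s + 10 * K) k
  have hρs : ∀ k, ρ (k + 1) = b (ρ k) + 10 * K := fun k => rfl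
  have hρb : ∀ k, ρ k ≤ b (ρ k) := fun k => (hρr _).trans (hrb _)
  have hρm : Monotone ρ := monotone_nat_of_le_succ fun k => by
    rw [hρs]; linarith [hρb k]
  obtain ⟨y, hy, hpy⟩ := hp.1 i (ρ m)
  obtain ⟨q, hq, h0, h1⟩ := hX.exists_lipschitz o y hK
  set L := dist o y + K with hL
  have hL0 : 0 ≤ L := by positivity
  set C : Set X := q '' Icc 0 L with hC
  have hCconn : IsConnected C :=
    ⟨⟨q 0, 0, ⟨le_rfl, hL0⟩, rfl⟩, isPreconnected_Icc.image _ hq.continuous.continuousOn⟩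
  have hleaf : ∀ k : Fin m, ∃ u, ρ k ≤ dist o u ∧ dist o u ≤ b (ρ k) ∧
      (∀ c ∈ C, K ≤ dist u c) ∧ ∃ c ∈ C, dist u c < 3 / 2 * K := by
    intro k
    have hrm : r (ρ k) ≤ dist o (q L) := by
      rw [h1]
      have h2 : ρ (k + 1) ≤ ρ m := hρm k.2
      rw [hρs] at h2
      linarith [hrb (ρ k)]
    obtain ⟨t, ht, htr, htL⟩ := exists_last_crossing hq h0 hL0 (hR₀.trans (hR₀r (ρ k))) hrm
    have hpt : Conn o R₀ (p i) (q t) := by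
      have h2 : Conn o R₀ (q t) (q L) := lipJoin_of_lipschitz hq ht.2 fun u hu =>
        (hR₀r (ρ k)).trans (htL u hu)
      rw [h1] at h2
      exact hpy.trans (LipJoin.symm h2)
    obtain ⟨hj1, hj2⟩ := hjoin (ρ k) (q t) htr hpt
    -- one of the two points of the pair is far from the crossing point
    obtain ⟨v, hv, hvt, hjv⟩ : ∃ v, dist o v = r (ρ k) ∧ 5 * K < dist v (q t) ∧
        LipJoin {y | ρ k ≤ dist o y ∧ dist o y ≤ b (ρ k)} v (q t) := by
      by_cases h : 5 * K < dist (x (ρ k)) (q t)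
      · exact ⟨_, hxr _, h, hj1⟩
      · refine ⟨_, hzr _, ?_, hj2⟩
        have h2 := dist_triangle_right (x (ρ k)) (z (ρ k)) (q t)
        have h3 := hxz (ρ k)
        linarith
    obtain ⟨l, g, hl, hg, rfl, hgl, hgS⟩ := hjv
    have hne : C.Nonempty := hCconn.1
    have hfar : 2 * K ≤ Metric.infDist (g 0) C := by
      rw [Metric.le_infDist hne]
      rintro _ ⟨u, hu, rfl⟩
      exact far_from_curve hq h0 (by rw [h1]) ht hu (by rw [hv, htr]) hvt
    have hend : Metric.infDist (g l) C = 0 :=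
      Metric.infDist_zero_of_mem (hgl ▸ ⟨t, ht, rfl⟩)
    obtain ⟨u, hu, huC⟩ := intermediate_value_Icc' hl
      (f := fun u => Metric.infDist (g u) C)
      ((Metric.continuous_infDist_pt C).comp hg.continuous).continuousOn
      (show 5 / 4 * K ∈ Icc _ _ from ⟨by rw [hend]; positivity, by linarith⟩)
    simp only at huC
    refine ⟨g u, (hgS u hu).1, (hgS u hu).2, fun c hc => ?_, ?_⟩
    · have := Metric.infDist_le_dist_of_mem (x := g u) hc
      linarith
    · exact (Metric.infDist_lt_iff hne).1 (by rw [huC]; linarith)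
  choose u hu1 hu2 hu3 hu4 using hleaf
  have hsep : ∀ i j : Fin m, i < j → 4 * K ≤ dist (u i) (u j) := by
    intro i j hij
    have h2 : ρ (i + 1) ≤ ρ j := hρm hij
    rw [hρs] at h2
    have h3 := dist_triangle o (u i) (u j)
    linarith [hu2 i, hu1 j]
  refine hN (fat_star_of_near hX hK hCconn u hu3 hu4 fun i j hij => ?_)
  rcases lt_or_gt_of_ne hij with h | h
  · exact hsep i j h
  · rw [dist_comm]; exact hsep j i h

/-- Coarse structure of a length space without fat `K_{1,m}` minor: outside a ball it consists
of `n < m` pieces `cl i`, each of which is coarsely a ray issuing from `o`. -/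
lemma exists_coarse_structure (hX : IsLengthSpace X) {m : ℕ} {K : ℝ} (hK : 0 < K)
    (hN : ¬ HasMetricFatMinor (starGraph m) X K) (o : X) :
    ∃ n < m, ∃ (R C : ℝ) (cl : Fin n → Set X), 0 < R ∧ 0 ≤ C ∧
      (∀ x, R ≤ dist o x → ∃ i, x ∈ cl i) ∧
      (∀ i j x z, i ≠ j → x ∈ cl i → z ∈ cl j → dist o x + dist o z - C ≤ dist x z) ∧
      (∀ i x z, x ∈ cl i → z ∈ cl i → R ≤ dist o z → dist o z ≤ dist o x →
        dist x z ≤ dist o x - dist o z + C) ∧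
      (∀ i s, R ≤ s → ∃ x ∈ cl i, dist o x = s) := by
  obtain ⟨n, hnm, R₀, hR₀, p, hp, hmax⟩ := exists_max_endFamily hX hK hN o
  obtain ⟨R', hR'⟩ := exists_forall_unb hX hK hN (o := o) hR₀
  choose W hW using end_width hX hK hN hR₀ hp hmax
  obtain ⟨M, hM⟩ := (Finset.univ.image W).exists_le
  have hM : ∀ i, W i ≤ M := fun i => hM _ (Finset.mem_image_of_mem _ (Finset.mem_univ i))
  set R := max (R₀ + K) (max R' M) with hR
  have hRR₀ : R₀ + K ≤ R := le_max_left _ _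
  have hRR' : R' ≤ R := (le_max_left _ _).trans (le_max_right _ _)
  have hRM : M ≤ R := (le_max_right _ _).trans (le_max_right _ _)
  refine ⟨n, hnm, R, 2 * R₀ + 11 * K, fun i => {x | Conn o R₀ (p i) x}, by linarith,
    by positivity, ?_, ?_, ?_, ?_⟩
  · intro x hx
    by_contra! h
    exact hmax R₀ hR₀ _ (hp.cons (hR' x (hRR'.trans hx)) h)
  · intro i j x z hij hx hz
    obtain ⟨q, hq, h0, h1⟩ := hX.exists_lipschitz x z hK
    have hL0 : 0 ≤ dist x z + K := by positivity
    obtain ⟨u, hu, hlt⟩ : ∃ u ∈ Icc 0 (dist x z + K), dist o (q u) < R₀ := by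
      by_contra! h
      have h2 : Conn o R₀ (q 0) (q (dist x z + K)) := lipJoin_of_lipschitz hq hL0 h
      rw [h0, h1] at h2
      exact hp.2 i j hij (LipJoin.trans hx (h2.trans (LipJoin.symm hz)))
    have h2 := lipschitz_dist hq 0 u
    have h3 := lipschitz_dist hq u (dist x z + K)
    rw [abs_of_nonpos (by linarith [hu.1]), h0] at h2
    rw [abs_of_nonpos (by linarith [hu.2]), h1] at h3
    have h4 := dist_triangle o (q u) x
    have h5 := dist_triangle o (q u) z
    have h6 := dist_comm x (q u)
    linarith
  · intro i x z hx hz hRz hzx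
    obtain ⟨c, hc, hd, hconn⟩ := exists_descend hX (o := o) x dist_nonneg hzx hK
    have h1 := hW i z c (((hM i).trans hRM).trans hRz) hc hz
      (LipJoin.trans hx (hconn.mono (by linarith)))
    have h2 := dist_triangle x c z
    rw [dist_comm z c] at h1
    linarith
  · intro i s hs
    obtain ⟨y, hy, hc⟩ := hp.1 i s
    obtain ⟨c, hc', -, hconn⟩ := exists_descend hX (o := o) y (s := s) (by linarith) hy hK
    exact ⟨c, LipJoin.trans hc (hconn.mono (by linarith)), hc'⟩

/-- A long nearly shortest curve contains a fat `K_{1,2}`. -/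
lemma fat_star_two (hX : IsLengthSpace X) {K : ℝ} (hK : 0 < K) {y : X}
    (hy : 10 * K ≤ dist o y) : HasMetricFatMinor (starGraph 2) X K := by
  obtain ⟨q, hq, h0, h1⟩ := hX.exists_lipschitz o y (ε := K / 4) (by linarith)
  set L := dist o y + K / 4 with hL
  have low : ∀ s t, 0 ≤ s → s ≤ t → t ≤ L → t - s - K / 4 ≤ dist (q s) (q t) := by
    intro s t hs hst ht
    have e1 := lipschitz_dist hq 0 s
    have e2 := lipschitz_dist hq t L
    rw [abs_of_nonpos (by linarith), h0] at e1
    rw [abs_of_nonpos (by linarith), h1] at e2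
    have := dist_triangle4 o (q s) (q t) y
    linarith
  refine fat_star_of_near hX hK (C := q '' Icc (3 * K) (6 * K))
    ⟨⟨_, 3 * K, ⟨le_rfl, by linarith⟩, rfl⟩,
      isPreconnected_Icc.image _ hq.continuous.continuousOn⟩
    ![q (7 / 4 * K), q (29 / 4 * K)] ?_ ?_ ?_
  · rw [Fin.forall_fin_two]
    constructor
    · rintro _ ⟨t, ht, rfl⟩
      have := low (7 / 4 * K) t (by linarith) (by linarith [ht.1]) (by linarith [ht.2])
      simp only [Matrix.cons_val_zero]
      linarith [ht.1]
    · rintro _ ⟨t, ht, rfl⟩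
      have := low t (29 / 4 * K) (by linarith [ht.1]) (by linarith [ht.2]) (by linarith)
      rw [dist_comm]
      simp only [Matrix.cons_val_one, Matrix.cons_val_fin_one]
      linarith [ht.2]
  · rw [Fin.forall_fin_two]
    constructor
    · refine ⟨_, ⟨3 * K, ⟨le_rfl, by linarith⟩, rfl⟩, ?_⟩
      have := lipschitz_dist hq (7 / 4 * K) (3 * K)
      rw [abs_of_nonpos (by linarith)] at this
      simp only [Matrix.cons_val_zero]
      linarith
    · refine ⟨_, ⟨6 * K, ⟨by linarith, le_rfl⟩, rfl⟩, ?_⟩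
      have := lipschitz_dist hq (29 / 4 * K) (6 * K)
      rw [abs_of_nonneg (by linarith)] at this
      simp only [Matrix.cons_val_one, Matrix.cons_val_fin_one]
      linarith
  · have := low (7 / 4 * K) (29 / 4 * K) (by linarith) (by linarith) (by linarith)
    intro i j hij
    fin_cases i <;> fin_cases j
    · exact absurd rfl hij
    · simp only [Fin.zero_eta, Fin.mk_one, Matrix.cons_val_zero, Matrix.cons_val_one,
        Matrix.cons_val_fin_one]
      linarith
    · rw [dist_comm]
      simp only [Fin.zero_eta, Fin.mk_one, Matrix.cons_val_zero, Matrix.cons_val_one,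
        Matrix.cons_val_fin_one]
      linarith
    · exact absurd rfl hij

end Width

/-! ### The spider -/

/-- The vertex at height `k` on leg `l` of the spider; height `0` is the root `none` on every
leg. -/
def spiderPt {n : ℕ} (l : Fin n) : ℕ → Option (Fin n × ℕ)
  | 0 => none
  | k + 1 => some (l, k)

/-- The neighbour closer to the root; the root is its own parent. -/
def spiderPar {n : ℕ} : Option (Fin n × ℕ) → Option (Fin n × ℕ)
  | none => none
  | some (l, k) => spiderPt l k

/-- The spider with `n` infinite legs: `n` rays glued together at their first vertex `none`. -/
def spider (n : ℕ) : SimpleGraph (Option (Fin n × ℕ)) :=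
  SimpleGraph.fromRel fun u v => spiderPar u = v

section Spider

variable {n : ℕ}

lemma spider_adj {u v : Option (Fin n × ℕ)} :
    (spider n).Adj u v ↔ u ≠ v ∧ (spiderPar u = v ∨ spiderPar v = u) := by
  simp [spider, SimpleGraph.fromRel_adj]

lemma spiderPt_inj {l : Fin n} {a b : ℕ} (h : spiderPt l a = spiderPt l b) : a = b := by
  cases a <;> cases b <;> simp_all [spiderPt]

lemma spider_adj_pt (l : Fin n) (k : ℕ) :
    (spider n).Adj (spiderPt l k) (spiderPt l (k + 1)) :=
  spider_adj.2 ⟨fun h => by have := spiderPt_inj h; omega, Or.inr rfl⟩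

lemma spider_neighbor {l : Fin n} {k : ℕ} {b : Option (Fin n × ℕ)}
    (h : (spider n).Adj (spiderPt l (k + 1)) b) :
    b = spiderPt l k ∨ b = spiderPt l (k + 2) := by
  obtain ⟨hne, h | h⟩ := spider_adj.1 h
  · exact Or.inl h.symm
  · right
    match b with
    | none => simp [spiderPar, spiderPt] at h
    | some (j, 0) => simp [spiderPar, spiderPt] at h
    | some (j, i + 1) =>
      simp only [spiderPar, spiderPt, Option.some.injEq, Prod.mk.injEq] at h
      obtain ⟨rfl, rfl⟩ := h
      rfl

lemma spider_exists_pt {v : Option (Fin n × ℕ)} (hv : v ≠ none) :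
    ∃ (l : Fin n) (k : ℕ), v = spiderPt l (k + 1) := by
  match v with
  | none => exact absurd rfl hv
  | some (l, k) => exact ⟨l, k, rfl⟩

lemma spider_connected : (spider n).Connected := by
  have h : ∀ v, (spider n).Reachable none v := by
    intro v
    by_cases hv : v = none
    · rw [hv]
    · obtain ⟨l, k, rfl⟩ := spider_exists_pt hv
      clear hv
      have : ∀ k, (spider n).Reachable none (spiderPt l k) := by
        intro k
        induction k with
        | zero => exact SimpleGraph.Reachable.refl _
        | succ k ih => exact ih.trans (spider_adj_pt l k).reachable
      exact this _
  exact ⟨fun u v => (h u).symm.trans (h v)⟩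

/-- A function changing by at most one along each edge is `1`-Lipschitz. -/
lemma spider_lipschitz (f : Option (Fin n × ℕ) → ℤ) (hf : ∀ v, |f v - f (spiderPar v)| ≤ 1)
    (u v : Option (Fin n × ℕ)) : |f u - f v| ≤ (spider n).dist u v := by
  obtain ⟨w, hw⟩ := spider_connected.exists_walk_length_eq_dist u v
  rw [← hw]
  clear hw
  induction w with
  | nil => simp
  | @cons a b c h w ih =>
    have h1 : |f a - f b| ≤ 1 := by
      obtain ⟨-, h | h⟩ := spider_adj.1 h
      · rw [← h]; exact hf a
      · rw [← h, abs_sub_comm]; exact hf b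
    have h2 := abs_sub_le (f a) (f b) (f c)
    rw [SimpleGraph.Walk.length_cons]
    push_cast
    linarith

lemma spider_dist_le (l : Fin n) (a d : ℕ) :
    (spider n).dist (spiderPt l a) (spiderPt l (a + d)) ≤ d := by
  induction d with
  | zero => simp
  | succ d ih =>
    have h1 := spider_connected.dist_triangle (u := spiderPt l a) (v := spiderPt l (a + d))
      (w := spiderPt l (a + d + 1))
    have h2 := SimpleGraph.dist_eq_one_iff_adj.2 (spider_adj_pt l (a + d))
    rw [← add_assoc]
    omega

/-- The signed height of a vertex: positive on leg `l`, negative on the other legs. -/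
def spiderHeight (l : Fin n) : Option (Fin n × ℕ) → ℤ
  | none => 0
  | some (j, k) => if j = l then (k : ℤ) + 1 else -((k : ℤ) + 1)

lemma spiderHeight_pt (l j : Fin n) (k : ℕ) :
    spiderHeight l (spiderPt j k) = if j = l then (k : ℤ) else -(k : ℤ) := by
  cases k <;> simp [spiderHeight, spiderPt]

lemma spiderHeight_par (l : Fin n) (v : Option (Fin n × ℕ)) :
    |spiderHeight l v - spiderHeight l (spiderPar v)| ≤ 1 := by
  match v with
  | none => simp [spiderPar]
  | some (j, k) =>
    rw [show spiderPar (some (j, k)) = spiderPt j k from rfl, spiderHeight_pt]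
    simp only [spiderHeight]
    split_ifs
    · simp
    · rw [abs_le]; constructor <;> linarith

lemma spider_dist_same (l : Fin n) {a b : ℕ} (h : a ≤ b) :
    (spider n).dist (spiderPt l a) (spiderPt l b) = b - a := by
  obtain ⟨d, rfl⟩ := Nat.exists_eq_add_of_le h
  have h1 := spider_dist_le l a d
  have h2 := spider_lipschitz _ (spiderHeight_par l) (spiderPt l a) (spiderPt l (a + d))
  rw [spiderHeight_pt, spiderHeight_pt, if_pos rfl, if_pos rfl, abs_le] at h2
  push_cast at h2
  omega

lemma spider_dist_none (l : Fin n) (a : ℕ) : (spider n).dist none (spiderPt l a) = a :=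
  spider_dist_same l (Nat.zero_le a)

lemma spider_dist_ne {l j : Fin n} (h : l ≠ j) (a b : ℕ) :
    (spider n).dist (spiderPt l a) (spiderPt j b) = a + b := by
  have h0 := spider_connected.dist_triangle (u := spiderPt l a) (v := none) (w := spiderPt j b)
  have hc : (spider n).dist (spiderPt l a) none = a := by
    rw [SimpleGraph.dist_comm, spider_dist_none]
  rw [hc, spider_dist_none] at h0
  have h2 := spider_lipschitz _ (spiderHeight_par l) (spiderPt l a) (spiderPt j b)
  rw [spiderHeight_pt, spiderHeight_pt, if_pos rfl, if_neg h.symm, abs_le] at h2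
  omega

lemma subset_of_induce_connected {V : Type*} {G : SimpleGraph V} {C A : Set V}
    (hC : (G.induce C).Connected) (hA : ∀ a ∈ A, ∀ b ∈ C, G.Adj a b → b ∈ A) {c : V}
    (hc : c ∈ C) (hcA : c ∈ A) : C ⊆ A := by
  intro d hd
  by_contra hdA
  obtain ⟨w⟩ := hC.preconnected ⟨c, hc⟩ ⟨d, hd⟩
  obtain ⟨e, -, h1, h2⟩ := w.exists_boundary_dart (Subtype.val ⁻¹' A) hcA hdA
  exact h2 (hA _ h1 _ e.snd.2 e.adj)

/-- A vertex of leg `l` outside a connected set `C` separates it: if some vertex of `C` lies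
above it, then all do. -/
lemma spider_cut {C : Set (Option (Fin n × ℕ))} (hC : ((spider n).induce C).Connected)
    {l : Fin n} {p : ℕ} (hp : spiderPt l p ∉ C) {c : ℕ} (hc : spiderPt l c ∈ C) (hpc : p < c) :
    ∀ v ∈ C, ∃ k, p < k ∧ v = spiderPt l k := by
  refine subset_of_induce_connected (A := {v | ∃ k, p < k ∧ v = spiderPt l k}) hC ?_ hc
    ⟨c, hpc, rfl⟩
  rintro _ ⟨k, hk, rfl⟩ b hb hadj
  obtain ⟨k, rfl⟩ : ∃ j, k = j + 1 := ⟨k - 1, by omega⟩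
  rcases spider_neighbor hadj with rfl | rfl
  · exact ⟨k, lt_of_le_of_ne (by omega) (fun h => hp (by rwa [h])), rfl⟩
  · exact ⟨k + 2, by omega, rfl⟩

/-- A connected set of vertices of the spider has at most `n` neighbours if it contains the
root, and at most two otherwise. -/
lemma spider_minor_free {m : ℕ} (hnm : n < m) (hm : 3 ≤ m ∨ n = 0) :
    ¬ IsGraphMinor (starGraph m) (spider n) := by
  rintro ⟨B, hconn, hdisj, hadj⟩
  have hC := hconn 0
  set C := B 0 with hCdef
  have : ∀ i : Fin m, ∃ a ∈ C, ∃ b ∈ B i.succ, (spider n).Adj a b := fun i =>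
    hadj 0 i.succ (starGraph_adj.2 ⟨(Fin.succ_ne_zero i).symm, Or.inl rfl⟩)
  choose a ha b hb hab using this
  have hbC : ∀ i, b i ∉ C := fun i h =>
    Set.disjoint_left.1 (hdisj 0 i.succ (Fin.succ_ne_zero i).symm) h (hb i)
  have hbinj : ∀ i j, i ≠ j → b i ≠ b j := fun i j hij h =>
    Set.disjoint_left.1 (hdisj i.succ j.succ fun h => hij (Fin.succ_injective _ h)) (hb i)
      (h ▸ hb j)
  by_cases hroot : none ∈ C
  · have : ∀ i, ∃ (l : Fin n) (k : ℕ), b i = spiderPt l (k + 1) := fun i =>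
      spider_exists_pt fun h => hbC i (h ▸ hroot)
    choose l k hk using this
    obtain ⟨i, j, hij, hl⟩ := Fintype.exists_ne_map_eq_of_card_lt l (by simpa using hnm)
    have main : ∀ i j, l i = l j → k i < k j → False := by
      intro i j hl hlt
      have hnot : ∀ c, k i + 1 < c → spiderPt (l i) c ∉ C := by
        intro c hc hcC
        obtain ⟨d, hd, hd'⟩ := spider_cut hC (hk i ▸ hbC i) hcC hc none hroot
        obtain rfl : 0 = d := spiderPt_inj (l := l i) hd'
        omega
      have h1 := (hab j).symm
      rw [hk j, ← hl] at h1
      have h2 := ha j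
      rcases spider_neighbor h1 with h | h
      · rw [h] at h2
        rcases (show k i + 1 ≤ k j from hlt).eq_or_lt with he | he
        · refine hbC i ?_
          rw [hk i, he]; exact h2
        · exact hnot _ he h2
      · rw [h] at h2
        exact hnot _ (by omega) h2
    rcases lt_trichotomy (k i) (k j) with h | h | h
    · exact main i j hl h
    · exact hbinj i j hij (by rw [hk i, hk j, hl, h])
    · exact main j i hl.symm h
  · obtain ⟨⟨c₀, hc₀⟩⟩ := hC.nonempty
    obtain ⟨l, c, rfl⟩ := spider_exists_pt (v := c₀) (fun h => hroot (h ▸ hc₀))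
    have hm3 : 3 ≤ m := hm.resolve_right fun h => by subst h; exact l.elim0
    have hleg : ∀ v ∈ C, ∃ k, 0 < k ∧ v = spiderPt l k :=
      spider_cut hC (p := 0) hroot hc₀ (by omega)
    have : ∀ i, ∃ s t, a i = spiderPt l s ∧ b i = spiderPt l t ∧ (s = t + 1 ∨ t = s + 1) := by
      intro i
      obtain ⟨s, hs, h⟩ := hleg _ (ha i)
      obtain ⟨s, rfl⟩ : ∃ j, s = j + 1 := ⟨s - 1, by omega⟩
      have h1 := hab i
      rw [h] at h1
      rcases spider_neighbor h1 with h2 | h2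
      · exact ⟨_, _, h, h2, Or.inl rfl⟩
      · exact ⟨_, _, h, h2, Or.inr rfl⟩
    choose s t hs ht hst using this
    -- each neighbour of `C` lies below or above the vertex of height `c + 1`
    obtain ⟨i, j, hij, hd⟩ := Fintype.exists_ne_map_eq_of_card_lt
      (fun i => decide (t i < c + 1)) (by simp; omega)
    have main : ∀ i j, (t i < c + 1 ↔ t j < c + 1) → t i < t j → False := by
      intro i j hd hlt
      by_cases hc : t j < c + 1
      · obtain ⟨k, hk, hk'⟩ := spider_cut hC (ht j ▸ hbC j) hc₀ hc _ (ha i)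
        rw [hs i] at hk'
        have := spiderPt_inj hk'
        have := hst i
        omega
      · have hsj : s j ≤ t i := by
          by_contra! hlt'
          obtain ⟨k, hk, hk'⟩ := spider_cut hC (ht i ▸ hbC i) (hs j ▸ ha j) hlt' _ hc₀
          have := spiderPt_inj hk'
          omega
        have h1 := hst j
        have : s j = t i := by omega
        refine hbC i ?_
        rw [ht i, ← this, ← hs j]
        exact ha j
    simp only [decide_eq_decide] at hd
    rcases lt_trichotomy (t i) (t j) with h | h | h
    · exact main i j hd h
    · exact hbinj i j hij (by rw [ht i, ht j, h])
    · exact main j i hd.symm h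

/-- The coarse structure provides a quasi-isometry to a spider: a point of the piece `cl i` at
distance `r` from `o` goes to the vertex of height `⌊r⌋` on leg `i`. -/
lemma quasiIsometric_spider {X : Type*} [MetricSpace X] {o : X} {R C : ℝ}
    {cl : Fin n → Set X} (hR : 0 < R) (hC : 0 ≤ C)
    (h1 : ∀ x, R ≤ dist o x → ∃ i, x ∈ cl i)
    (h2 : ∀ i j x z, i ≠ j → x ∈ cl i → z ∈ cl j → dist o x + dist o z - C ≤ dist x z)
    (h3 : ∀ i x z, x ∈ cl i → z ∈ cl i → R ≤ dist o z → dist o z ≤ dist o x →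
      dist x z ≤ dist o x - dist o z + C)
    (h4 : ∀ i s, R ≤ s → ∃ x ∈ cl i, dist o x = s) :
    QuasiIsometric (fun x y : X => dist x y) (graphDist (spider n)) := by
  classical
  choose lab hlab using h1
  set f : X → Option (Fin n × ℕ) := fun x =>
    if h : R ≤ dist o x then spiderPt (lab x h) ⌊dist o x⌋₊ else none with hf
  set A := 2 * R + C + 2 with hA
  have hA0 : 0 ≤ A := by positivity
  have key : ∀ x z, dist o z ≤ dist o x →
      dist x z - A ≤ graphDist (spider n) (f x) (f z) ∧
      graphDist (spider n) (f x) (f z) ≤ dist x z + A := by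
    intro x z hzx
    have fx1 := Nat.floor_le (dist_nonneg (x := o) (y := x))
    have fx2 := Nat.lt_floor_add_one (dist o x)
    have fz1 := Nat.floor_le (dist_nonneg (x := o) (y := z))
    have fz2 := Nat.lt_floor_add_one (dist o z)
    have t1 := dist_triangle_left x z o
    have t2 := dist_triangle_right o x z
    have t3 := dist_nonneg (x := x) (y := z)
    have t4 := dist_nonneg (x := o) (y := z)
    by_cases hx : R ≤ dist o x
    · have efx : f x = spiderPt (lab x hx) ⌊dist o x⌋₊ := dif_pos hx
      by_cases hz : R ≤ dist o z
      · have efz : f z = spiderPt (lab z hz) ⌊dist o z⌋₊ := dif_pos hz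
        by_cases hl : lab x hx = lab z hz
        · have hle : ⌊dist o z⌋₊ ≤ ⌊dist o x⌋₊ := Nat.floor_le_floor hzx
          have e : graphDist (spider n) (f x) (f z) = (⌊dist o x⌋₊ : ℝ) - ⌊dist o z⌋₊ := by
            rw [graphDist, SimpleGraph.dist_comm, efx, efz, hl, spider_dist_same _ hle,
              Nat.cast_sub hle]
          have h5 := h3 _ x z (hlab x hx) (hl ▸ hlab z hz) hz hzx
          rw [e]
          constructor <;> linarith
        · have e : graphDist (spider n) (f x) (f z) = (⌊dist o x⌋₊ : ℝ) + ⌊dist o z⌋₊ := by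
            rw [graphDist, efx, efz, spider_dist_ne hl, Nat.cast_add]
          have h5 := h2 _ _ x z hl (hlab x hx) (hlab z hz)
          rw [e]
          constructor <;> linarith
      · have efz : f z = none := dif_neg hz
        have e : graphDist (spider n) (f x) (f z) = (⌊dist o x⌋₊ : ℝ) := by
          rw [graphDist, SimpleGraph.dist_comm, efx, efz, spider_dist_none]
        rw [e]
        constructor <;> linarith
    · have efx : f x = none := dif_neg hx
      have efz : f z = none := dif_neg fun h => hx (h.trans hzx)
      have e : graphDist (spider n) (f x) (f z) = 0 := by simp [graphDist, efx, efz]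
      rw [e]
      constructor <;> linarith
  have key' : ∀ x z, dist x z - A ≤ graphDist (spider n) (f x) (f z) ∧
      graphDist (spider n) (f x) (f z) ≤ dist x z + A := by
    intro x z
    rcases le_total (dist o z) (dist o x) with h | h
    · exact key x z h
    · have := key z x h
      rwa [graphDist, SimpleGraph.dist_comm, dist_comm z x] at this
  refine ⟨1, A, f, le_rfl, hA0, fun x y => ?_, fun x y => ?_, fun v => ?_⟩
  · simpa using (key' x y).1
  · simpa using (key' x y).2
  · have hfo : f o = none := dif_neg (by simpa using hR)
    by_cases hv : v = none
    · exact ⟨o, by simpa [hv, hfo, graphDist] using hA0⟩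
    obtain ⟨i, k, rfl⟩ := spider_exists_pt hv
    by_cases hk : R ≤ ((k + 1 : ℕ) : ℝ)
    · obtain ⟨x, hx, hxk⟩ := h4 i _ hk
      have hRx : R ≤ dist o x := hxk ▸ hk
      have efx : f x = spiderPt (lab x hRx) (k + 1) := by
        have e : f x = spiderPt (lab x hRx) ⌊dist o x⌋₊ := dif_pos hRx
        rw [e, hxk, Nat.floor_natCast]
      refine ⟨x, ?_⟩
      by_cases hl : i = lab x hRx
      · rw [efx, ← hl]
        simpa [graphDist] using hA0
      · -- the pieces `cl i` can only overlap near `o`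
        have h5 := h2 _ _ x x hl hx (hlab x hRx)
        rw [dist_self, hxk] at h5
        rw [efx, graphDist, spider_dist_ne hl, Nat.cast_add]
        linarith
    · refine ⟨o, ?_⟩
      rw [hfo, graphDist, SimpleGraph.dist_comm, spider_dist_none]
      linarith

end Spider

/-! ### From fat stars to star minors of a quasi-isometric graph -/

section Converse

/-- The vertices of `G` within distance `r` of the image of `S`. -/
def coarseImage {X V : Type*} (G : SimpleGraph V) (f : X → V) (r : ℝ) (S : Set X) : Set V :=
  {v | ∃ x ∈ S, (G.dist (f x) v : ℝ) ≤ r}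

variable {X V : Type*} {G : SimpleGraph V} {f : X → V} {r : ℝ} {S : Set X}

lemma mem_coarseImage (hr : 0 ≤ r) {x : X} (hx : x ∈ S) : f x ∈ coarseImage G f r S :=
  ⟨x, hx, by simpa using hr⟩

lemma coarseImage_reachable (hG : G.Connected) (hr : 0 ≤ r) {x : X} (hx : x ∈ S) {v : V}
    (hv : (G.dist (f x) v : ℝ) ≤ r) :
    (G.induce (coarseImage G f r S)).Reachable ⟨f x, mem_coarseImage hr hx⟩ ⟨v, x, hx, hv⟩ := by
  obtain ⟨k, hk⟩ : ∃ k, G.dist (f x) v = k := ⟨_, rfl⟩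
  induction k generalizing v with
  | zero =>
    obtain rfl := (hG.dist_eq_zero_iff).1 hk
    exact SimpleGraph.Reachable.refl _
  | succ k ih =>
    -- the penultimate vertex `u` of a shortest walk to `v` is one step closer to `f x`
    obtain ⟨u, huv, hu⟩ : ∃ u, G.Adj u v ∧ G.dist (f x) u = k := by
      obtain ⟨w, hw⟩ := hG.exists_walk_length_eq_dist v (f x)
      rw [SimpleGraph.dist_comm, hk] at hw
      cases w with
      | nil => simp at hw
      | @cons _ u _ h w =>
        rw [SimpleGraph.Walk.length_cons] at hw
        have h1 := SimpleGraph.dist_le w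
        have h2 := hG.dist_triangle (u := f x) (v := u) (w := v)
        have h3 := SimpleGraph.dist_eq_one_iff_adj.2 h.symm
        rw [SimpleGraph.dist_comm] at h1
        exact ⟨u, h.symm, by omega⟩
    have hur : (G.dist (f x) u : ℝ) ≤ r := by
      refine le_trans ?_ hv
      rw [hu, hk]
      push_cast
      linarith
    exact (ih hur hu).trans (SimpleGraph.Adj.reachable (by simpa using huv))

/-- Coarse images of connected sets are connected: points of `S` at distance less than `1` have
images at distance at most `M + A`. -/
lemma coarseImage_connected {X : Type*} [MetricSpace X] {f : X → V} {S : Set X}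
    (hG : G.Connected) {M A : ℝ} (hM : 0 ≤ M) (hA : 0 ≤ A)
    (hf : ∀ x y, graphDist G (f x) (f y) ≤ M * dist x y + A) (hS : IsConnected S) :
    (G.induce (coarseImage G f (M + A) S)).Connected := by
  have hr : 0 ≤ M + A := by positivity
  have main : ∀ x (hx : x ∈ S) y (hy : y ∈ S), (G.induce (coarseImage G f (M + A) S)).Reachable
      ⟨f x, mem_coarseImage hr hx⟩ ⟨f y, mem_coarseImage hr hy⟩ := by
    intro x hx y hy
    have := hS.isPreconnected.induction₂' (fun x y => ∀ (hx : x ∈ S) (hy : y ∈ S),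
      (G.induce (coarseImage G f (M + A) S)).Reachable
        ⟨f x, mem_coarseImage hr hx⟩ ⟨f y, mem_coarseImage hr hy⟩) ?_ ?_ hx hy
    · exact this hx hy
    · intro x hx
      filter_upwards [mem_nhdsWithin_of_mem_nhds (Metric.ball_mem_nhds x one_pos)] with y hy
      have h : (G.dist (f x) (f y) : ℝ) ≤ M + A := by
        refine (hf x y).trans ?_
        have : dist x y ≤ 1 := (Metric.mem_ball'.1 hy).le
        nlinarith
      exact ⟨fun hx _ => coarseImage_reachable hG hr hx h,
        fun _ hx => (coarseImage_reachable hG hr hx h).symm⟩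
    · intro x y z _ hy _ h1 h2 hx hz
      exact (h1 hx hy).trans (h2 hy hz)
  obtain ⟨x, hx⟩ := hS.nonempty
  have : Nonempty (coarseImage G f (M + A) S) := ⟨⟨f x, mem_coarseImage hr hx⟩⟩
  refine ⟨?_⟩
  rintro ⟨u, x, hx, hu⟩ ⟨v, y, hy, hv⟩
  exact ((coarseImage_reachable hG hr hx hu).symm.trans (main x hx y hy)).trans
    (coarseImage_reachable hG hr hy hv)

lemma coarseImage_disjoint {X : Type*} [MetricSpace X] {f : X → V} {S T : Set X}
    (hG : G.Connected) {M A : ℝ} (hM : 0 < M)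
    (hf : ∀ x y, M⁻¹ * dist x y - A ≤ graphDist G (f x) (f y)) {r : ℝ}
    (h : ∀ x ∈ S, ∀ y ∈ T, M * (2 * r + A) + 1 ≤ dist x y) :
    Disjoint (coarseImage G f r S) (coarseImage G f r T) := by
  rw [Set.disjoint_left]
  rintro v ⟨x, hx, hxv⟩ ⟨y, hy, hyv⟩
  have h1 := h x hx y hy
  have h2 := hf x y
  have h3 : (G.dist (f x) (f y) : ℝ) ≤ G.dist (f x) v + G.dist (f y) v := by
    rw [SimpleGraph.dist_comm (u := f y)]
    exact_mod_cast hG.dist_triangle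
  have h4 : M⁻¹ * dist x y ≤ 2 * r + A := by
    unfold graphDist at h2
    linarith
  rw [inv_mul_le_iff₀ hM] at h4
  linarith

/-- A fat star in `X` gives a star minor in `G`: its centre is the coarse image of the centre
branch set, and its leaves are single vertices, chosen on the coarse images of the pairwise far
apart sets consisting of a leaf branch set and the branch path leading to it. -/
lemma not_asymptotic_of_graph {X : Type*} [MetricSpace X] {m : ℕ} (hG : G.Connected)
    (hmin : ¬ IsGraphMinor (starGraph m) G)
    (hqi : QuasiIsometric (fun x y : X => dist x y) (graphDist G)) :
    ¬ HasAsymptoticMinor (starGraph m) X := by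
  intro has
  obtain ⟨M, A, f, hM, hA, hlow, hup, -⟩ := hqi
  have hM0 : 0 < M := by linarith
  set r := M + A with hr
  have hr0 : 0 ≤ r := by positivity
  obtain ⟨B, P, hB, -, hP, -, hBB, hPP, hPB⟩ := has (M * (2 * r + A) + 1) (by positivity)
  have hadj : ∀ i : Fin m, (starGraph m).Adj 0 i.succ := fun i =>
    starGraph_adj.2 ⟨(Fin.succ_ne_zero i).symm, Or.inl rfl⟩
  have hne : ∀ i j : Fin m, i ≠ j → i.succ ≠ j.succ := fun i j h h' =>
    h (Fin.succ_injective _ h')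
  choose a ha b hb harc _ using fun i => hP 0 i.succ (hadj i)
  set S : Fin m → Set X := fun i => P s(0, i.succ) ∪ B i.succ with hS
  have hSc : ∀ i, IsConnected (S i) := fun i =>
    (harc i).isConnected.union ⟨b i, (harc i).symm.left_mem, hb i⟩ (hB _)
  have hSS : ∀ i j, i ≠ j → Disjoint (coarseImage G f r (S i)) (coarseImage G f r (S j)) := by
    intro i j hij
    refine coarseImage_disjoint hG hM0 hlow ?_
    have hedge : s((0 : Fin (m + 1)), i.succ) ≠ s(0, j.succ) := by
      simpa using hij
    rintro x (hx | hx) y (hy | hy)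
    · exact hPP _ (hadj i) _ (hadj j) hedge x hx y hy
    · exact hPB 0 i.succ (hadj i) j.succ (Fin.succ_ne_zero j) (hne _ _ hij.symm) x hx y hy
    · rw [dist_comm]
      exact hPB 0 j.succ (hadj j) i.succ (Fin.succ_ne_zero i) (hne _ _ hij) y hy x hx
    · exact hBB _ _ (hne _ _ hij) x hx y hy
  have hB0 : ∀ i : Fin m, Disjoint (coarseImage G f r (B 0)) (coarseImage G f r (B i.succ)) :=
    fun i => coarseImage_disjoint hG hM0 hlow (hBB _ _ (Fin.succ_ne_zero i).symm)
  have hleaf : ∀ i : Fin m, ∃ u v, u ∈ coarseImage G f r (B 0) ∧ v ∉ coarseImage G f r (B 0) ∧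
      v ∈ coarseImage G f r (S i) ∧ G.Adj u v := by
    intro i
    obtain ⟨w⟩ := (coarseImage_connected hG hM0.le hA hup (hSc i)).preconnected
      ⟨f (a i), mem_coarseImage hr0 (Or.inl (harc i).left_mem)⟩
      ⟨f (b i), mem_coarseImage hr0 (Or.inr (hb i))⟩
    obtain ⟨d, -, h1, h2⟩ := w.exists_boundary_dart
      (Subtype.val ⁻¹' coarseImage G f r (B 0)) (mem_coarseImage hr0 (ha i))
      (fun h => Set.disjoint_left.1 (hB0 i) h (mem_coarseImage hr0 (hb i)))
    exact ⟨_, _, h1, h2, d.snd.2, d.adj⟩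
  choose u v hu hv hvS huv using hleaf
  refine hmin ⟨Fin.cons (coarseImage G f r (B 0)) fun i => {v i}, ?_, ?_, ?_⟩
  · intro w
    refine Fin.cases ?_ (fun i => ?_) w
    · exact coarseImage_connected hG hM0.le hA hup (hB 0)
    · rw [Fin.cons_succ]
      have : Nonempty ({v i} : Set V) := ⟨⟨v i, rfl⟩⟩
      refine ⟨?_⟩
      rintro ⟨_, rfl⟩ ⟨_, rfl⟩
      exact SimpleGraph.Reachable.refl _
  · intro w w'
    refine Fin.cases (Fin.cases ?_ (fun j => ?_) w') (fun i => Fin.cases ?_ (fun j => ?_) w') w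
    · simp
    · intro _
      simpa using hv j
    · intro _
      simpa using hv i
    · intro hij
      simp only [Fin.cons_succ, Set.disjoint_singleton]
      intro h
      exact Set.disjoint_left.1 (hSS i j fun h => hij (congrArg _ h)) (hvS i) (h ▸ hvS j)
  · intro w w' h
    obtain ⟨hne', rfl | rfl⟩ := starGraph_adj.1 h
    · obtain ⟨i, rfl⟩ := Fin.exists_succ_eq.2 hne'.symm
      exact ⟨u i, hu i, v i, rfl, huv i⟩
    · obtain ⟨i, rfl⟩ := Fin.exists_succ_eq.2 hne'
      exact ⟨v i, rfl, u i, hu i, (huv i).symm⟩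

end Converse

/-- Let `X` be a length space and `m ≥ 1`. Then `X` has no asymptotic `K_{1,m}` minor iff
`X` is quasi-isometric to a graph with no `K_{1,m}` minor. -/
theorem no_asymptotic_star_minor_iff_quasiIsometric_star_minor_free
    {X : Type} [MetricSpace X] [Nonempty X] (hX : IsLengthSpace X)
    (m : ℕ) (hm : 1 ≤ m) :
    (¬ HasAsymptoticMinor (starGraph m) X) ↔
    (∃ (V : Type) (G : SimpleGraph V), G.Connected ∧ ¬ IsGraphMinor (starGraph m) G ∧
      QuasiIsometric (fun x y : X => dist x y) (graphDist G)) := by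
  refine ⟨fun h => ?_, ?_⟩
  · obtain ⟨K, hK, hN⟩ : ∃ K : ℝ, 0 < K ∧ ¬ HasMetricFatMinor (starGraph m) X K := by
      simpa [HasAsymptoticMinor] using h
    obtain ⟨o⟩ := ‹Nonempty X›
    obtain ⟨n, hnm, R, C, cl, hR, hC, h1, h2, h3, h4⟩ := exists_coarse_structure hX hK hN o
    refine ⟨_, spider n, spider_connected, spider_minor_free hnm ?_,
      quasiIsometric_spider hR hC h1 h2 h3 h4⟩
    -- only `m = 2` needs care: a ray contains `K_{1,2}`, but a space with a point far from `o`
    -- already has a fat `K_{1,2}`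
    by_contra! hc
    obtain ⟨rfl, rfl⟩ : m = 2 ∧ n = 1 := by omega
    obtain ⟨x, -, hx⟩ := h4 0 (max R (10 * K)) (le_max_left _ _)
    exact hN (fat_star_two hX hK (y := x) (hx ▸ le_max_right _ _))
  · rintro ⟨V, G, hG, hmin, hqi⟩
    exact not_asymptotic_of_graph hG hmin hqi
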